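/- arXiv:2101.01458 — 3 statements merged into one kernel-verified Lean document; each statement's English description precedes it below -/
import Mathlib

section
/- Let $G$ be an infinite countable discrete amenable group and $d$ a positive integer. Then there exists a compact metric space $X$ and a continuous action of $G$ on $X$ which is minimal (every orbit is dense), whose mean dimension equals $d/2$, and which cannot be embedded in the full $G$-shift on $([0,1]^d)^G$ (i.e., there is no continuous injective $G$-equivariant map from $X$ into $([0,1]^d)^G$ equipped with the shift action). -/
open Set Filter Topology
open scoped ENNReal NNReal symmDiff

/-- Right translate `S·c = {s * c : s ∈ S}` of a subset of a group. -/
def rightTranslate {G : Type*} [Group G] (S : Set G) (c : G) : Set G := (fun s => s * c) '' S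

/-- The boundary set `B(F,T) = {g ∈ G : Tg ∩ F ≠ ∅ and Tg ∩ (G \ F) ≠ ∅}`. -/
def Bset {G : Type*} [Group G] (F T : Set G) : Set G :=
  {g : G | (rightTranslate T g ∩ F).Nonempty ∧ (rightTranslate T g ∩ Fᶜ).Nonempty}

/-- `F` is `(T,ε)`-invariant: `|B(F,T)| < ε * |F|`. -/
def IsInvariantSet {G : Type*} [Group G] (F T : Set G) (ε : ℝ) : Prop :=
  ((Bset F T).ncard : ℝ) < ε * (F.ncard : ℝ)

/-- A Følner sequence of nonempty finite subsets of `G`. -/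
def IsFolnerSeq {G : Type*} [Group G] (F : ℕ → Set G) : Prop :=
  (∀ n, (F n).Finite ∧ (F n).Nonempty) ∧
    ∀ g : G, Tendsto
      (fun n => ((symmDiff (F n) ((fun x => g * x) '' (F n))).ncard : ℝ) / ((F n).ncard : ℝ))
      atTop (nhds 0)

/-- A countable discrete group is amenable if it admits a Følner sequence. -/
def AmenableGroup (G : Type*) [Group G] : Prop := ∃ F : ℕ → Set G, IsFolnerSeq F

/-- A tiling of `G`: pairwise disjoint nonempty finite subsets covering `G`. -/
def IsTilingOf {G : Type*} [Group G] (𝒯 : Set (Set G)) : Prop :=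
  (∀ T ∈ 𝒯, T.Finite ∧ T.Nonempty) ∧
    (∀ T ∈ 𝒯, ∀ T' ∈ 𝒯, T ≠ T' → Disjoint T T') ∧ ⋃₀ 𝒯 = Set.univ

/-- `𝒮` is a (finite) set of shapes for the tiling `𝒯`. -/
def IsShapeSet {G : Type*} [Group G] (𝒯 𝒮 : Set (Set G)) : Prop :=
  𝒮.Finite ∧ (∀ S ∈ 𝒮, S.Finite ∧ S.Nonempty) ∧
    ∀ T ∈ 𝒯, ∃ S ∈ 𝒮, ∃ c : G, T = rightTranslate S c

/-- The center of a shape `S` relative to a tiling `𝒯`. -/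
def center {G : Type*} [Group G] (𝒯 : Set (Set G)) (S : Set G) : Set G :=
  {c : G | rightTranslate S c ∈ 𝒯}

/-- A syndetic subset: `G = F·A` for some finite `F`. -/
def SyndeticSet {G : Type*} [Group G] (A : Set G) : Prop :=
  ∃ F : Set G, F.Finite ∧ Set.image2 (· * ·) F A = Set.univ

/-- The translation `𝒯g = {Tg : T ∈ 𝒯}` of a tiling. -/
def tilingTranslate {G : Type*} [Group G] (𝒯 : Set (Set G)) (g : G) : Set (Set G) :=
  (fun T => rightTranslate T g) '' 𝒯

/-- The restriction `𝒯|_F = {T ∩ F : T ∈ 𝒯}`. -/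
def tilingRestrict {G : Type*} [Group G] (𝒯 : Set (Set G)) (F : Set G) : Set (Set G) :=
  (fun T => T ∩ F) '' 𝒯

/-- The full `G`-shift: `(σ_g x)_h = x_{hg}`. -/
def shift {G K : Type*} [Group G] (g : G) (x : G → K) : G → K := fun h => x (h * g)

/-- A subshift: a closed shift-invariant subset of `K^G`. -/
def IsSubshift {G : Type*} (K : Type*) [Group G] [TopologicalSpace K]
    (X : Set (G → K)) : Prop :=
  IsClosed X ∧ ∀ g : G, ∀ x ∈ X, shift g x ∈ X

/-- A weight `α : G → (0,∞)` with `α e = 1` and `∑ α < ∞`, defining the product metric. -/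
def IsGoodWeight {G : Type*} [Group G] (α : G → ℝ) : Prop :=
  α 1 = 1 ∧ (∀ g, 0 < α g) ∧ Summable α

/-- The metric `ρ(x,y) = ∑_g α_g d(x_g, y_g)` on `K^G`. -/
noncomputable def rhoMetric {G K : Type*} [Group G] [PseudoMetricSpace K] (α : G → ℝ)
    (x y : G → K) : ℝ :=
  ∑' g : G, α g * dist (x g) (y g)

/-- `ρ_F(x,y) = max_{g ∈ F} ρ(gx, gy)` for finite `F ⊆ G`. -/
noncomputable def rhoMetricF {G K : Type*} [Group G] [PseudoMetricSpace K] (α : G → ℝ)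
    (F : Set G) (x y : G → K) : ℝ :=
  sSup ((fun g => rhoMetric α (shift g x) (shift g y)) '' F)

/-- `d_F(x,y) = max_{g∈F} d(gx, gy)` for an action `φ`. -/
noncomputable def dynDist {G X : Type*} [Group G] [PseudoMetricSpace X]
    (φ : G → X → X) (F : Set G) (x y : X) : ℝ :=
  sSup ((fun g => dist (φ g x) (φ g y)) '' F)

/-- An `ε`-embedding w.r.t. `ρ`: continuous, and `f x = f y → ρ x y < ε`. -/
def IsEpsEmb {X Y : Type*} [TopologicalSpace X] [TopologicalSpace Y]
    (ρ : X → X → ℝ) (ε : ℝ) (f : X → Y) : Prop :=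
  Continuous f ∧ ∀ x y, f x = f y → ρ x y < ε

/-- `Widim_ε(X,ρ) ≤ n`: there is an `ε`-embedding of `X` into (the geometric realization of)
a finite simplicial complex all of whose faces have at most `n+1` vertices. -/
def WidimLE (X : Type*) [TopologicalSpace X] (ρ : X → X → ℝ) (ε : ℝ) (n : ℕ) : Prop :=
  ∃ (N : ℕ) (P : Geometry.SimplicialComplex ℝ (Fin N → ℝ)),
    P.faces.Finite ∧ (∀ s ∈ P.faces, s.card ≤ n + 1) ∧
      ∃ f : X → P.space, IsEpsEmb ρ ε f

/-- `Widim_ε(X,ρ)`: the minimum dimension of a polyhedron admitting an `ε`-embedding of `X`. -/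
noncomputable def widim (X : Type*) [TopologicalSpace X] (ρ : X → X → ℝ) (ε : ℝ) : ℕ∞ :=
  sInf {n : ℕ∞ | ∃ m : ℕ, n = (m : ℕ∞) ∧ WidimLE X ρ ε m}

/-- Covering dimension `≤ n`: every open cover admits an open refinement of multiplicity `≤ n+1`. -/
def DimLE (X : Type*) [TopologicalSpace X] (n : ℕ) : Prop :=
  ∀ 𝒰 : Set (Set X), (∀ U ∈ 𝒰, IsOpen U) → ⋃₀ 𝒰 = Set.univ →
    ∃ 𝒱 : Set (Set X), (∀ V ∈ 𝒱, IsOpen V) ∧ ⋃₀ 𝒱 = Set.univ ∧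
      (∀ V ∈ 𝒱, ∃ U ∈ 𝒰, V ⊆ U) ∧
      ∀ x : X, ({V ∈ 𝒱 | x ∈ V}).Finite ∧ ({V ∈ 𝒱 | x ∈ V}).ncard ≤ n + 1

/-- Topological (covering) dimension, valued in `ℕ∞`. -/
noncomputable def covDim (X : Type*) [TopologicalSpace X] : ℕ∞ :=
  sInf {n : ℕ∞ | ∃ m : ℕ, n = (m : ℕ∞) ∧ DimLE X m}

/-- Mean dimension of the action `φ` computed along the Følner sequence `F`
(as `sup_{ε>0} limsup_n Widim_ε(X, d_{F_n}) / |F_n|`). -/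
noncomputable def mdimAlong {G X : Type*} [Group G] [PseudoMetricSpace X]
    (φ : G → X → X) (F : ℕ → Set G) : ℝ≥0∞ :=
  ⨆ ε : {ε : ℝ // 0 < ε}, Filter.limsup
    (fun n => ((widim X (dynDist φ (F n)) ε.1 : ℕ∞) : ℝ≥0∞) / ((F n).ncard : ℝ≥0∞)) atTop

/-- Mean dimension of a subshift `X ⊆ K^G` computed along the Følner sequence `F`,
with the metric `ρ` induced by the weight `α`. -/
noncomputable def mdimSubshift {G K : Type*} [Group G] [PseudoMetricSpace K] (α : G → ℝ)
    (X : Set (G → K)) (F : ℕ → Set G) : ℝ≥0∞ :=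
  ⨆ ε : {ε : ℝ // 0 < ε}, Filter.limsup
    (fun n => ((widim X (fun x y : X => rhoMetricF α (F n) x.1 y.1) ε.1 : ℕ∞) : ℝ≥0∞) /
      ((F n).ncard : ℝ≥0∞)) atTop

/-- The canonical projection `π_F : K^G → K^F`. -/
def projTo {G K : Type*} (F : Set G) (x : G → K) : F → K := fun g => x g.1

/-- The tripod (cone over three points), realized as the subset of `ℝ³` of points with at most
one nonzero coordinate, each coordinate lying in `[0,1]`; the ℓ¹-distance on this set is exactly
the graph distance in which each of the three edges has length one. -/
def TripodSet : Set (Fin 3 → ℝ) :=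
  {x | (∀ i, x i ∈ Set.Icc (0 : ℝ) 1) ∧ ∀ i j : Fin 3, i ≠ j → x i = 0 ∨ x j = 0}

/-- The graph distance on the tripod (= the ℓ¹-distance of the ambient `ℝ³`). -/
noncomputable def tripodDist (x y : TripodSet) : ℝ := ∑ i, |x.1 i - y.1 i|

/-- The `l^∞`-distance on `P^n` for the tripod `P`. -/
noncomputable def tripodDistInf {n : ℕ} (x y : Fin n → TripodSet) : ℝ :=
  sSup (Set.range fun i => tripodDist (x i) (y i))

/-!
Let `P` be the tripod. The power `P ^ n` has dimension `n`, but it contains an image of the boundary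
of the `2n`-cube in which antipodal points are far apart, so by Borsuk–Ulam every continuous map
from `P ^ n` to `ℝ ^ m` with `m < 2 n` identifies two distant points.

Over a free minimal zero-dimensional system `Z` we build a minimal system of pairs `(z, x)` with
`x : G → P ^ d`, where `x g` is unconstrained when `g • z` lies in a closed set `A` and otherwise is
a function of `g • z`. The set `A` is the intersection of a generic decreasing sequence of clopen
sets whose densities decrease to `1 / 2`, which makes the mean dimension `d / 2`. Genericity also
gives, for every finite `W`, a point `z` and a finite `F` with more than `|W F| / 2` free sites in
`F`. Under an embedding into the shift on `[0, 1] ^ d`, the `d |W F|` coordinates in `W F` would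
determine the symbols at these sites up to a small error, which the first paragraph excludes.
-/

/-! ### Ordered chains modulo two -/

/-- Ordered simplicial chains with coefficients in `ZMod 2`: a simplex is the list of its
vertices, degenerate ones included, and the empty list is the augmentation simplex. -/
abbrev OrderedChain (E : Type*) := List E →₀ ZMod 2

namespace OrderedChain

section Algebra

variable {E E' M : Type*} [AddCommGroup M] [Module (ZMod 2) M]

theorem add_self (c : OrderedChain E) : c + c = 0 := by
  ext l
  exact CharTwo.add_self_eq_zero _

theorem linearMap_ext {f g : OrderedChain E →ₗ[ZMod 2] M}
    (h : ∀ l, f (.single l 1) = g (.single l 1)) : f = g :=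
  Finsupp.lhom_ext' fun l => LinearMap.ext_ring (h l)

theorem linearMap_eqOn_supported {S : Set (List E)} {f g : OrderedChain E →ₗ[ZMod 2] M}
    (h : ∀ l ∈ S, f (.single l 1) = g (.single l 1)) {c : OrderedChain E}
    (hc : c ∈ Finsupp.supported (ZMod 2) (ZMod 2) S) : f c = g c := by
  rw [Finsupp.supported_eq_span_single] at hc
  exact LinearMap.eqOn_span' (forall_mem_image.2 h) hc

theorem map_mem_of_mem_supported {S : Set (List E)} {f : OrderedChain E →ₗ[ZMod 2] M}
    {p : Submodule (ZMod 2) M} (h : ∀ l ∈ S, f (.single l 1) ∈ p) {c : OrderedChain E}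
    (hc : c ∈ Finsupp.supported (ZMod 2) (ZMod 2) S) : f c ∈ p := by
  rw [Finsupp.supported_eq_span_single] at hc
  exact (Submodule.span_le (p := p.comap f)).2 (forall_mem_image.2 h) hc

/-- The map of chains induced by a map of vertices. -/
noncomputable def map (f : E → E') : OrderedChain E →ₗ[ZMod 2] OrderedChain E' :=
  Finsupp.lmapDomain (ZMod 2) (ZMod 2) (List.map f)

@[simp]
theorem map_single (f : E → E') (l : List E) (a : ZMod 2) :
    map f (.single l a) = .single (l.map f) a := by
  simp [map]

/-- The cone with apex `b` over a chain. -/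
noncomputable def cone (b : E) : OrderedChain E →ₗ[ZMod 2] OrderedChain E :=
  Finsupp.lmapDomain (ZMod 2) (ZMod 2) (List.cons b)

@[simp]
theorem cone_single (b : E) (l : List E) (a : ZMod 2) :
    cone b (.single l a) = .single (b :: l) a := by
  simp [cone]

theorem map_cone (f : E → E') (b : E) (c : OrderedChain E) :
    map f (cone b c) = cone (f b) (map f c) :=
  LinearMap.congr_fun (f := map f ∘ₗ cone b) (g := cone (f b) ∘ₗ map f)
    (linearMap_ext fun l => by simp) c

/-- The augmented simplicial boundary: `∂[v] = []`. -/
noncomputable def boundary : OrderedChain E →ₗ[ZMod 2] OrderedChain E :=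
  Finsupp.linearCombination (ZMod 2) fun l => ∑ i : Fin l.length, .single (l.eraseIdx i) 1

theorem boundary_single (l : List E) :
    boundary (.single l 1) = ∑ i : Fin l.length, .single (l.eraseIdx i) 1 := by
  simp [boundary]

@[simp]
theorem boundary_single_nil : boundary (.single ([] : List E) 1) = 0 := by
  simp [boundary_single]

theorem boundary_single_cons (b : E) (l : List E) :
    boundary (.single (b :: l) 1) = .single l 1 + cone b (boundary (.single l 1)) := by
  simp [boundary_single, Fin.sum_univ_succ]

theorem boundary_single_mem_supported (l : List E) :
    boundary (.single l 1) ∈ Finsupp.supported (ZMod 2) (ZMod 2)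
      {l' | l'.length + 1 = l.length ∧ l' ⊆ l} := by
  rw [boundary_single]
  refine Submodule.sum_mem _ fun i _ => Finsupp.single_mem_supported _ _ ⟨?_, ?_⟩
  · exact List.length_eraseIdx_add_one i.2
  · exact List.eraseIdx_subset

theorem linearMap_ext_of_boundary {f g : OrderedChain E →ₗ[ZMod 2] M}
    (nil : f (.single [] 1) = g (.single [] 1))
    (face : ∀ l ≠ [], f (boundary (.single l 1)) = g (boundary (.single l 1)) →
      f (.single l 1) = g (.single l 1)) : f = g := by
  refine linearMap_ext fun l => ?_
  induction hn : l.length generalizing l with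
  | zero => rwa [List.length_eq_zero_iff.1 hn]
  | succ n ih =>
    refine face l (by rintro rfl; simp at hn) (linearMap_eqOn_supported ?_
      (boundary_single_mem_supported l))
    exact fun l' hl' => ih l' (by have := hl'.1; omega)

theorem boundary_cone (b : E) (c : OrderedChain E) :
    boundary (cone b c) = c + cone b (boundary c) :=
  LinearMap.congr_fun (f := boundary ∘ₗ cone b) (g := LinearMap.id + cone b ∘ₗ boundary)
    (linearMap_ext fun l => by simp [boundary_single_cons]) c

theorem boundary_boundary (c : OrderedChain E) : boundary (boundary c) = 0 := by
  refine LinearMap.congr_fun (f := boundary ∘ₗ boundary) (g := 0) (linearMap_ext fun l => ?_) c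
  induction l with
  | nil => simp
  | cons b l ih =>
    simp only [LinearMap.comp_apply, LinearMap.zero_apply] at ih
    simp [boundary_single_cons, boundary_cone, ih, add_self]

theorem boundary_map (f : E → E') (c : OrderedChain E) :
    boundary (map f c) = map f (boundary c) := by
  refine LinearMap.congr_fun (f := boundary ∘ₗ map f) (g := map f ∘ₗ boundary)
    (linearMap_ext fun l => ?_) c
  induction l with
  | nil => simp
  | cons b l ih =>
    simp only [LinearMap.comp_apply, map_single] at ih
    simp [boundary_single_cons, map_cone, ih]

/-- The value of a cochain on a chain. -/
noncomputable def eval (φ : List E → ZMod 2) : OrderedChain E →ₗ[ZMod 2] ZMod 2 :=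
  Finsupp.linearCombination (ZMod 2) φ

@[simp]
theorem eval_single (φ : List E → ZMod 2) (l : List E) : eval φ (.single l 1) = φ l := by
  simp [eval]

theorem exists_mem_of_eval_ne_zero {φ : List E → ZMod 2} {S : Set (List E)} {c : OrderedChain E}
    (hc : c ∈ Finsupp.supported (ZMod 2) (ZMod 2) S) (h : eval φ c ≠ 0) : ∃ l ∈ S, φ l ≠ 0 := by
  contrapose! h
  exact linearMap_eqOn_supported (g := 0) (fun l hl => by simpa using h l hl) hc

end Algebra

section Cochains

variable {E : Type*} (s : ℕ → E → ZMod 2)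

/-- The cup product `δ s_k ⌣ δ s_{k+1} ⌣ ⋯` of the coboundaries of the vertex labellings
`s k, s (k + 1), …`. -/
def coboundaryCup : ℕ → List E → ZMod 2
  | _, [] => 0
  | _, [_] => 1
  | k, v :: w :: l => (s k w + s k v) * coboundaryCup (k + 1) (w :: l)

/-- The cochain `s_k ⌣ δ s_{k+1} ⌣ δ s_{k+2} ⌣ ⋯`, a primitive of `coboundaryCup s k`. -/
def coboundaryCupPrimitive (k : ℕ) : List E → ZMod 2
  | [] => 0
  | v :: l => s k v * coboundaryCup s (k + 1) (v :: l)

theorem exists_ne_of_coboundaryCup_ne_zero {l : List E} {k : ℕ} (h : coboundaryCup s k l ≠ 0)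
    {i : ℕ} (hi : i + 1 < l.length) : ∃ u ∈ l, ∃ w ∈ l, s (k + i) u ≠ s (k + i) w := by
  induction l generalizing k i with
  | nil => simp at hi
  | cons v l ih =>
    match l, i, hi with
    | [], _, hi => simp at hi
    | w :: l, 0, _ =>
      refine ⟨w, by simp, v, by simp, fun heq => left_ne_zero_of_mul h ?_⟩
      simpa using CharTwo.add_eq_zero.2 heq
    | w :: l, i + 1, hi =>
      obtain ⟨u, hu, u', hu', hne⟩ := ih (right_ne_zero_of_mul h) (i := i) (by simpa using hi)
      rw [add_right_comm] at hne
      exact ⟨u, .tail _ hu, u', .tail _ hu', hne⟩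

theorem eval_coboundaryCup_cone (k : ℕ) (v : E) {c : OrderedChain E}
    (hc : c ∈ Finsupp.supported (ZMod 2) (ZMod 2) {l | l ≠ []}) :
    eval (coboundaryCup s k) (cone v c) =
      eval (coboundaryCupPrimitive s k) c + s k v * eval (coboundaryCup s (k + 1)) c := by
  refine linearMap_eqOn_supported (f := eval (coboundaryCup s k) ∘ₗ cone v)
    (g := eval (coboundaryCupPrimitive s k) + s k v • eval (coboundaryCup s (k + 1))) ?_ hc
  rintro (_ | ⟨w, l⟩) hl
  · exact absurd rfl hl
  · simp [coboundaryCup, coboundaryCupPrimitive, add_mul]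

theorem eval_coboundaryCupPrimitive_cone (k : ℕ) (v : E) (c : OrderedChain E) :
    eval (coboundaryCupPrimitive s k) (cone v c) =
      s k v * eval (coboundaryCup s (k + 1)) (cone v c) :=
  LinearMap.congr_fun (f := eval (coboundaryCupPrimitive s k) ∘ₗ cone v)
    (g := s k v • (eval (coboundaryCup s (k + 1)) ∘ₗ cone v))
    (linearMap_ext fun l => by simp [coboundaryCupPrimitive]) c

theorem eval_boundary_single (l : List E) (hl : 2 ≤ l.length) (k : ℕ) :
    eval (coboundaryCup s k) (boundary (.single l 1)) = 0 ∧
      eval (coboundaryCupPrimitive s k) (boundary (.single l 1)) = coboundaryCup s k l := by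
  induction l generalizing k with
  | nil => simp at hl
  | cons v l ih =>
    match l with
    | [] => simp at hl
    | [w] => simp [boundary_single_cons, coboundaryCup, coboundaryCupPrimitive,
        CharTwo.add_self_eq_zero]
    | w :: u :: l =>
      have ne_nil : boundary (.single (w :: u :: l) 1) ∈
          Finsupp.supported (ZMod 2) (ZMod 2) {l | l ≠ []} := by
        refine Finsupp.supported_mono ?_ (boundary_single_mem_supported _)
        rintro l' ⟨hlen, -⟩ rfl
        simp at hlen
      have cocycle (k : ℕ) :
          eval (coboundaryCup s k) (boundary (.single (v :: w :: u :: l) 1)) = 0 := by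
        rw [boundary_single_cons, map_add, eval_single, eval_coboundaryCup_cone s k v ne_nil,
          (ih (by simp) k).2, (ih (by simp) (k + 1)).1, mul_zero, add_zero,
          CharTwo.add_self_eq_zero]
      refine ⟨cocycle k, ?_⟩
      have hface := cocycle (k + 1)
      rw [boundary_single_cons, map_add, eval_single, CharTwo.add_eq_zero] at hface
      rw [boundary_single_cons, map_add, eval_single, eval_coboundaryCupPrimitive_cone, ← hface,
        coboundaryCupPrimitive]
      exact (add_mul _ _ _).symm

theorem eval_coboundaryCupPrimitive_boundary (k : ℕ) {c : OrderedChain E}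
    (hc : c ∈ Finsupp.supported (ZMod 2) (ZMod 2) {l | 2 ≤ l.length}) :
    eval (coboundaryCupPrimitive s k) (boundary c) = eval (coboundaryCup s k) c :=
  linearMap_eqOn_supported (f := eval (coboundaryCupPrimitive s k) ∘ₗ boundary)
    (fun l hl => by simpa using (eval_boundary_single s l hl k).2) hc

variable {s} [AddCommGroup E]

theorem coboundaryCup_map_neg (hs : ∀ k v, v ≠ 0 → s k (-v) = s k v + 1) {l : List E}
    (hl : ∀ v ∈ l, v ≠ 0) (k : ℕ) : coboundaryCup s k (l.map Neg.neg) = coboundaryCup s k l := by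
  induction l generalizing k with
  | nil => rfl
  | cons v l ih =>
    match l with
    | [] => rfl
    | w :: l =>
      have htail := ih (fun u hu => hl u (.tail _ hu)) (k + 1)
      simp only [List.map_cons, coboundaryCup] at htail ⊢
      rw [htail, hs k w (hl w (by simp)), hs k v (hl v (by simp)), add_add_add_comm,
        CharTwo.add_self_eq_zero 1, add_zero]

theorem eval_coboundaryCupPrimitive_add_map_neg (hs : ∀ k v, v ≠ 0 → s k (-v) = s k v + 1) (k : ℕ)
    {c : OrderedChain E}
    (hc : c ∈ Finsupp.supported (ZMod 2) (ZMod 2) {l | l ≠ [] ∧ ∀ v ∈ l, v ≠ 0}) :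
    eval (coboundaryCupPrimitive s k) (c + map Neg.neg c) = eval (coboundaryCup s (k + 1)) c := by
  refine linearMap_eqOn_supported
    (f := eval (coboundaryCupPrimitive s k) ∘ₗ (LinearMap.id + map Neg.neg)) ?_ hc
  rintro (_ | ⟨v, l⟩) ⟨hne, hl⟩
  · exact absurd rfl hne
  · have hneg := coboundaryCup_map_neg hs hl (k + 1)
    rw [List.map_cons] at hneg
    simp only [LinearMap.comp_apply, LinearMap.add_apply, LinearMap.id_apply, map_add, map_single,
      eval_single, List.map_cons, coboundaryCupPrimitive, hneg, hs k v (hl v (by simp))]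
    rw [add_one_mul, ← add_assoc, CharTwo.add_self_eq_zero, zero_add]

end Cochains

end OrderedChain

/-! ### Barycentric subdivision and a Tucker-type lemma -/

section Barycenter

variable {E E' : Type*}

/-- The barycenter of a list of points, counted with multiplicity (`0` for the empty list). -/
noncomputable def barycenter [AddCommMonoid E] [Module ℝ E] (l : List E) : E :=
  (l.length : ℝ)⁻¹ • l.sum

theorem map_barycenter [AddCommGroup E] [Module ℝ E] [AddCommGroup E'] [Module ℝ E']
    (f : E →ₗ[ℝ] E') (l : List E) : f (barycenter l) = barycenter (l.map f) := by
  simp [barycenter, map_list_sum]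

theorem barycenter_mem_of_convex [AddCommGroup E] [Module ℝ E] {K : Set E} (hK : Convex ℝ K)
    {l : List E} (hne : l ≠ []) (h : ∀ v ∈ l, v ∈ K) : barycenter l ∈ K := by
  have hlen : (l.length : ℝ) ≠ 0 := by simpa using hne
  rw [barycenter, ← Fin.sum_univ_getElem, Finset.smul_sum]
  exact hK.sum_mem (fun _ _ => by positivity) (by simp [hlen]) fun i _ => h _ (l.getElem_mem i.2)

theorem dist_barycenter_le [NormedAddCommGroup E] [NormedSpace ℝ E] {l : List E} {δ : ℝ} {M : ℕ}
    (hM : l.length ≤ M) (h : ∀ v ∈ l, ∀ w ∈ l, dist v w ≤ δ) {v : E} (hv : v ∈ l) :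
    dist v (barycenter l) ≤ (1 - 1 / (M : ℝ)) * δ := by
  obtain ⟨j, hj, rfl⟩ := List.mem_iff_getElem.1 hv
  have hpos : (0 : ℝ) < l.length := by exact_mod_cast j.zero_le.trans_lt hj
  have hδ : 0 ≤ δ := dist_nonneg.trans (h _ hv _ hv)
  have hsub : barycenter l - l[j] = (l.length : ℝ)⁻¹ • ∑ i : Fin l.length, (l[i.1] - l[j]) := by
    rw [Finset.sum_sub_distrib, Fin.sum_univ_getElem, smul_sub, barycenter, Finset.sum_const,
      Finset.card_fin, ← Nat.cast_smul_eq_nsmul ℝ, inv_smul_smul₀ hpos.ne']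
  have hsum : ∑ i : Fin l.length, ‖l[i.1] - l[j]‖ ≤ (l.length - 1) * δ := by
    have hle := Finset.sum_le_card_nsmul (Finset.univ.erase (⟨j, hj⟩ : Fin l.length))
      (fun i => ‖l[i.1] - l[j]‖) δ fun i _ => by
        simpa [dist_eq_norm] using h _ (l.getElem_mem i.2) _ hv
    rw [Finset.sum_erase _ (by simp), Finset.card_erase_of_mem (Finset.mem_univ _),
      Finset.card_fin, nsmul_eq_mul, Nat.cast_pred (by omega)] at hle
    exact hle
  calc dist l[j] (barycenter l)
      = (l.length : ℝ)⁻¹ * ‖∑ i : Fin l.length, (l[i.1] - l[j])‖ := by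
        rw [dist_comm, dist_eq_norm, hsub, norm_smul, norm_inv, Real.norm_natCast]
    _ ≤ (l.length : ℝ)⁻¹ * ((l.length - 1) * δ) := by
        gcongr
        exact (norm_sum_le _ _).trans hsum
    _ = (1 - 1 / (l.length : ℝ)) * δ := by field_simp
    _ ≤ (1 - 1 / (M : ℝ)) * δ := by gcongr

end Barycenter

namespace OrderedChain

section Subdivision

variable {E E' : Type*} [AddCommGroup E] [Module ℝ E] [AddCommGroup E'] [Module ℝ E']

/-- The barycentric subdivision of one simplex: the cone from its barycenter over the subdivided
boundary. -/
noncomputable def subdivideSimplex : List E → OrderedChain E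
  | [] => .single [] 1
  | v :: l => cone (barycenter (v :: l))
      (∑ i : Fin (l.length + 1), subdivideSimplex ((v :: l).eraseIdx i))
termination_by l => l.length
decreasing_by
  rw [List.length_eraseIdx_of_lt i.2]
  simp

/-- Barycentric subdivision of chains. -/
noncomputable def subdivision : OrderedChain E →ₗ[ZMod 2] OrderedChain E :=
  Finsupp.linearCombination (ZMod 2) subdivideSimplex

theorem subdivision_single_nil :
    subdivision (.single ([] : List E) 1) = .single [] 1 := by
  simp [subdivision, subdivideSimplex]

theorem subdivision_single {l : List E} (hl : l ≠ []) :
    subdivision (.single l 1) = cone (barycenter l) (subdivision (boundary (.single l 1))) := by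
  cases l with
  | nil => exact absurd rfl hl
  | cons v l => simp [subdivision, subdivideSimplex, boundary_single]

theorem boundary_subdivision (c : OrderedChain E) :
    boundary (subdivision c) = subdivision (boundary c) := by
  suffices h : boundary ∘ₗ subdivision = subdivision ∘ₗ boundary (E := E) from
    LinearMap.congr_fun h c
  refine linearMap_ext_of_boundary (by simp [subdivision_single_nil]) fun l hl face => ?_
  simp only [LinearMap.comp_apply, boundary_boundary, map_zero] at face
  simp [subdivision_single hl, boundary_cone, face]

theorem subdivision_map (f : E →ₗ[ℝ] E') (c : OrderedChain E) :
    subdivision (map f c) = map f (subdivision c) := by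
  suffices h : subdivision ∘ₗ map f = map f ∘ₗ subdivision from LinearMap.congr_fun h c
  refine linearMap_ext_of_boundary (by simp [subdivision_single_nil]) fun l hl face => ?_
  simp only [LinearMap.comp_apply] at face ⊢
  rw [map_single, subdivision_single (by simpa using hl), ← map_single, boundary_map, face,
    subdivision_single hl, map_cone, map_barycenter]

theorem boundary_subdivision_pow (r : ℕ) (c : OrderedChain E) :
    boundary ((subdivision ^ r) c) = (subdivision ^ r) (boundary c) := by
  have h : Commute (S := Module.End (ZMod 2) (OrderedChain E)) boundary subdivision :=
    LinearMap.ext boundary_subdivision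
  exact LinearMap.congr_fun (h.pow_right r).eq c

theorem subdivision_pow_map_neg (r : ℕ) (c : OrderedChain E) :
    (subdivision ^ r) (map Neg.neg c) = map Neg.neg ((subdivision ^ r) c) := by
  have h : Commute (S := Module.End (ZMod 2) (OrderedChain E)) subdivision (map Neg.neg) :=
    LinearMap.ext (subdivision_map (-LinearMap.id))
  exact LinearMap.congr_fun (h.pow_left r).eq c

theorem subdivision_pow_single_singleton (r : ℕ) (v : E) :
    (subdivision (E := E) ^ r) (.single [v] 1) = .single [v] 1 := by
  induction r with
  | zero => rfl
  | succ r ih =>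
    simp [pow_succ, ih, subdivision_single, boundary_single_cons, subdivision_single_nil,
      barycenter]

end Subdivision

section Mesh

variable {E : Type*} [NormedAddCommGroup E] [NormedSpace ℝ E] {K : Set E} {M n : ℕ} {δ : ℝ}

/-- The `n`-vertex simplices with vertices in `K` at mutual distance at most `δ`. -/
def smallSimplices (K : Set E) (n : ℕ) (δ : ℝ) : Set (List E) :=
  {l | l.length = n ∧ (∀ v ∈ l, v ∈ K) ∧ ∀ v ∈ l, ∀ w ∈ l, dist v w ≤ δ}

theorem subdivision_single_mem_supported {l : List E} (hM : l.length ≤ M) (hK : Convex ℝ K)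
    (hl : l ∈ smallSimplices K l.length δ) :
    subdivision (.single l 1) ∈ Finsupp.supported (ZMod 2) (ZMod 2)
      (smallSimplices K l.length ((1 - 1 / M) * δ)) := by
  induction hn : l.length generalizing l K with
  | zero =>
    rw [List.length_eq_zero_iff.1 hn, subdivision_single_nil]
    exact Finsupp.single_mem_supported _ _ (by simp [smallSimplices])
  | succ n ih =>
    obtain ⟨-, hlK, hdist⟩ := hl
    have hne : l ≠ [] := by rintro rfl; simp at hn
    set ball := Metric.closedBall (barycenter l) ((1 - 1 / M) * δ)
    have hl_ball {v : E} (hv : v ∈ l) : v ∈ ball := dist_barycenter_le hM hdist hv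
    have hfaces : subdivision (boundary (.single l 1)) ∈ Finsupp.supported (ZMod 2) (ZMod 2)
        (smallSimplices (K ∩ ball) n ((1 - 1 / M) * δ)) := by
      refine map_mem_of_mem_supported (fun l' hl' => ?_) (boundary_single_mem_supported l)
      obtain ⟨hlen, hsub⟩ := hl'
      have hlen' : l'.length = n := by omega
      exact ih (by omega) (hK.inter (convex_closedBall _ _))
        ⟨rfl, fun v hv => ⟨hlK v (hsub hv), hl_ball (hsub hv)⟩,
          fun v hv w hw => hdist v (hsub hv) w (hsub hw)⟩ hlen'
    rw [subdivision_single hne]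
    refine map_mem_of_mem_supported (fun l' hl' => ?_) hfaces
    obtain ⟨hlen, hmem, hdist'⟩ := hl'
    obtain ⟨v₀, hv₀⟩ := List.exists_mem_of_ne_nil l hne
    have hself : dist (barycenter l) (barycenter l) ≤ (1 - 1 / M) * δ := by
      rw [dist_self]
      exact dist_nonneg.trans (hl_ball hv₀)
    rw [cone_single]
    refine Finsupp.single_mem_supported _ _ ⟨by simp [hlen], List.forall_mem_cons.2
      ⟨barycenter_mem_of_convex hK hne hlK, fun v hv => (hmem v hv).1⟩, List.forall_mem_cons.2
      ⟨List.forall_mem_cons.2 ⟨hself, fun v hv => ?_⟩, fun v hv => List.forall_mem_cons.2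
        ⟨(hmem v hv).2, hdist' v hv⟩⟩⟩
    rw [dist_comm]
    exact (hmem v hv).2

theorem subdivision_pow_mem_supported (hK : Convex ℝ K) (r : ℕ) {c : OrderedChain E}
    (hc : c ∈ Finsupp.supported (ZMod 2) (ZMod 2) (smallSimplices K n δ)) :
    (subdivision ^ r) c ∈ Finsupp.supported (ZMod 2) (ZMod 2)
      (smallSimplices K n ((1 - 1 / n) ^ r * δ)) := by
  induction r with
  | zero => simpa using hc
  | succ r ih =>
    rw [pow_succ', pow_succ', mul_assoc, Module.End.mul_apply]
    refine map_mem_of_mem_supported (fun l hl => ?_) ih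
    obtain rfl := hl.1
    exact subdivision_single_mem_supported le_rfl hK hl

end Mesh

section CrossPolytope

variable {E : Type*}

/-- The boundary of the cross-polytope with vertices `±v`, `v ∈ l`. -/
noncomputable def crossPolytope [Neg E] : List E → OrderedChain E
  | [] => .single [] 1
  | v :: l => cone v (crossPolytope l) + cone (-v) (crossPolytope l)

/-- The lists obtained from `l` by changing the signs of some of its entries. -/
def signChanges [Neg E] (l : List E) : Set (List E) :=
  {l' | List.Forall₂ (fun w v => w = v ∨ w = -v) l' l}

theorem cone_mem_supported_signChanges [Neg E] {v w : E} (hw : w = v ∨ w = -v) {l : List E}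
    {c : OrderedChain E} (hc : c ∈ Finsupp.supported (ZMod 2) (ZMod 2) (signChanges l)) :
    cone w c ∈ Finsupp.supported (ZMod 2) (ZMod 2) (signChanges (v :: l)) :=
  map_mem_of_mem_supported (fun l' hl' => by
    rw [cone_single]
    exact Finsupp.single_mem_supported _ _ (List.Forall₂.cons hw hl')) hc

theorem crossPolytope_mem_supported [Neg E] (l : List E) :
    crossPolytope l ∈ Finsupp.supported (ZMod 2) (ZMod 2) (signChanges l) := by
  induction l with
  | nil => exact Finsupp.single_mem_supported _ _ List.Forall₂.nil
  | cons v l ih =>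
    exact Submodule.add_mem _ (cone_mem_supported_signChanges (.inl rfl) ih)
      (cone_mem_supported_signChanges (.inr rfl) ih)

theorem boundary_crossPolytope [Neg E] (l : List E) : boundary (crossPolytope l) = 0 := by
  induction l with
  | nil => exact boundary_single_nil
  | cons v l ih => simp [crossPolytope, boundary_cone, ih, add_self]

theorem boundary_cone_crossPolytope [Neg E] (v : E) (l : List E) :
    boundary (cone v (crossPolytope l)) = crossPolytope l := by
  rw [boundary_cone, boundary_crossPolytope, map_zero, add_zero]

theorem map_neg_crossPolytope [InvolutiveNeg E] (l : List E) :
    map Neg.neg (crossPolytope l) = crossPolytope l := by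
  induction l with
  | nil => simp [crossPolytope]
  | cons v l ih => simp [crossPolytope, map_cone, ih, add_comm]

variable [NormedAddCommGroup E] [NormedSpace ℝ E] {s : ℕ → E → ZMod 2}

theorem subdivision_pow_single_mem_supported_convexHull (r : ℕ) (l : List E) :
    (subdivision ^ r) (.single l 1) ∈ Finsupp.supported (ZMod 2) (ZMod 2)
      (smallSimplices (convexHull ℝ {v | v ∈ l}) l.length
        ((1 - 1 / l.length) ^ r * Metric.diam {v | v ∈ l})) :=
  subdivision_pow_mem_supported (convex_convexHull ℝ _) r <| Finsupp.single_mem_supported _ _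
    ⟨rfl, fun _ hv => subset_convexHull ℝ _ hv, fun _ hv _ hw =>
      Metric.dist_le_diam_of_mem l.finite_toSet.isBounded hv hw⟩

theorem eval_subdivision_pow_cone_crossPolytope (hs : ∀ k v, v ≠ 0 → s k (-v) = s k v + 1) (r : ℕ)
    (v : E) (l : List E)
    (h0 : ∀ l' ∈ signChanges (v :: l), (0 : E) ∉ convexHull ℝ {w | w ∈ l'}) (k : ℕ) :
    eval (coboundaryCup s k) ((subdivision ^ r) (cone v (crossPolytope l))) = 1 := by
  induction l generalizing v k with
  | nil => simp [crossPolytope, subdivision_pow_single_singleton, coboundaryCup]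
  | cons w l ih =>
    have hlength : (subdivision ^ r) (cone v (crossPolytope (w :: l))) ∈
        Finsupp.supported (ZMod 2) (ZMod 2) {l | 2 ≤ l.length} := by
      refine map_mem_of_mem_supported (fun l' hl' => ?_)
        (cone_mem_supported_signChanges (.inl rfl) (crossPolytope_mem_supported (w :: l)))
      refine Finsupp.supported_mono ?_ (subdivision_pow_single_mem_supported_convexHull r l')
      rintro l'' ⟨hlen, -⟩
      simp [hlen, List.Forall₂.length_eq hl']
    have hvertices : (subdivision ^ r) (cone w (crossPolytope l)) ∈
        Finsupp.supported (ZMod 2) (ZMod 2) {l | l ≠ [] ∧ ∀ v ∈ l, v ≠ 0} := by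
      refine map_mem_of_mem_supported (fun l' hl' => ?_)
        (cone_mem_supported_signChanges (.inl rfl) (crossPolytope_mem_supported l))
      refine Finsupp.supported_mono ?_ (subdivision_pow_single_mem_supported_convexHull r l')
      rintro l'' ⟨hlen, hmem, -⟩
      refine ⟨List.ne_nil_of_length_pos (by simp [hlen, List.Forall₂.length_eq hl']), ?_⟩
      rintro _ hu rfl
      exact h0 (v :: l') (.cons (.inl rfl) hl')
        (convexHull_mono (fun _ => List.mem_cons_of_mem _) (hmem 0 hu))
    rw [← eval_coboundaryCupPrimitive_boundary s k hlength, boundary_subdivision_pow,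
      boundary_cone_crossPolytope, crossPolytope, ← map_neg_crossPolytope l, ← map_cone,
      map_neg_crossPolytope, map_add, subdivision_pow_map_neg,
      eval_coboundaryCupPrimitive_add_map_neg hs k hvertices]
    exact ih w (fun l' hl' h => h0 (v :: l') (.cons (.inl rfl) hl')
      (convexHull_mono (fun _ => List.mem_cons_of_mem _) h)) (k + 1)

theorem exists_small_simplex_separated (hs : ∀ k v, v ≠ 0 → s k (-v) = s k v + 1) {l : List E}
    (hl : l ≠ []) (h0 : ∀ l' ∈ signChanges l, (0 : E) ∉ convexHull ℝ {w | w ∈ l'}) {δ : ℝ}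
    (hδ : 0 < δ) : ∃ l₀ ∈ signChanges l,
      ∃ l' ∈ smallSimplices (convexHull ℝ {w | w ∈ l₀}) l.length δ,
        ∀ i, i + 1 < l.length → ∃ u ∈ l', ∃ w ∈ l', s i u ≠ s i w := by
  obtain ⟨v, l, rfl⟩ := List.exists_cons_of_ne_nil hl
  set n := (v :: l).length
  set c := cone v (crossPolytope l)
  have hc : c ∈ Finsupp.supported (ZMod 2) (ZMod 2) (signChanges (v :: l)) :=
    cone_mem_supported_signChanges (.inl rfl) (crossPolytope_mem_supported l)
  have hratio : 0 ≤ 1 - 1 / (n : ℝ) ∧ 1 - 1 / (n : ℝ) < 1 := by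
    have hn : (1 : ℝ) ≤ n := by exact_mod_cast List.length_pos_of_ne_nil hl
    exact ⟨sub_nonneg.2 ((div_le_one (by linarith)).2 hn), sub_lt_self _ (by positivity)⟩
  obtain ⟨r, hr⟩ : ∃ r : ℕ, ∀ l₀ ∈ c.support,
      (1 - 1 / (n : ℝ)) ^ r * Metric.diam {w | w ∈ l₀} ≤ δ := by
    refine ((c.support.eventually_all).2 fun l₀ _ => ?_ : ∀ᶠ r in atTop, _).exists
    have hlim := (tendsto_pow_atTop_nhds_zero_of_lt_one hratio.1 hratio.2).mul_const
      (Metric.diam {w | w ∈ l₀})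
    rw [zero_mul] at hlim
    exact hlim.eventually_le_const hδ
  have hsmall : (subdivision ^ r) c ∈ Finsupp.supported (ZMod 2) (ZMod 2)
      (⋃ l₀ ∈ signChanges (v :: l), smallSimplices (convexHull ℝ {w | w ∈ l₀}) n δ) := by
    refine map_mem_of_mem_supported (S := c.support) (fun l₀ hl₀ => ?_)
      ((Finsupp.mem_supported _ _).2 subset_rfl)
    refine Finsupp.supported_mono ?_ (subdivision_pow_single_mem_supported_convexHull r l₀)
    have hlen : l₀.length = n := List.Forall₂.length_eq (hc hl₀)
    rintro l' ⟨hlen', hmem, hdist⟩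
    rw [hlen] at hlen' hdist
    exact mem_iUnion₂.2 ⟨l₀, hc hl₀, hlen', hmem, fun u hu w hw =>
      (hdist u hu w hw).trans (hr l₀ hl₀)⟩
  obtain ⟨l', hl', hne⟩ := exists_mem_of_eval_ne_zero (φ := coboundaryCup s 0) hsmall (by
    rw [eval_subdivision_pow_cone_crossPolytope hs r v l h0]
    exact one_ne_zero)
  obtain ⟨l₀, hl₀, hl'⟩ := mem_iUnion₂.1 hl'
  refine ⟨l₀, hl₀, l', hl', fun i hi => ?_⟩
  simpa using exists_ne_of_coboundaryCup_ne_zero s hne (i := i) (hl'.1 ▸ hi)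

end CrossPolytope

end OrderedChain

/-! ### The Borsuk–Ulam theorem -/

/-- The label `1` of positive elements and `0` of all others; off zero it is flipped by
negation. -/
def signParity {α : Type*} [Zero α] [LT α] [DecidableLT α] (a : α) : ZMod 2 :=
  if 0 < a then 1 else 0

theorem signParity_neg {α : Type*} [AddCommGroup α] [LinearOrder α] [IsOrderedAddMonoid α] {a : α}
    (ha : a ≠ 0) : signParity (-a) = signParity a + 1 := by
  rcases ha.lt_or_gt with h | h
  · simp [signParity, h, h.not_gt]
  · simp [signParity, h, h.not_gt, CharTwo.add_self_eq_zero]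

theorem mul_nonpos_of_signParity_toLex_ne {α : Type*} [Zero α] [LinearOrder α] {x y : ℝ} {a b : α}
    (h : signParity (toLex (x, a)) ≠ signParity (toLex (y, b))) : x * y ≤ 0 := by
  contrapose! h
  have hpos : ∀ {z : ℝ} {c : α}, z ≠ 0 → (0 < toLex (z, c) ↔ 0 < z) := fun {z c} hz => by
    simp [Prod.Lex.lt_iff, hz.symm]
  have hiff : 0 < x ↔ 0 < y := by
    rcases pos_and_pos_or_neg_and_neg_of_mul_pos h with hxy | hxy
    · simp [hxy]
    · simp [hxy.1.not_gt, hxy.2.not_gt]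
  simp only [signParity, hpos (left_ne_zero_of_mul h.ne'), hpos (right_ne_zero_of_mul h.ne'), hiff]

theorem abs_lt_of_mul_nonpos {x y z ε : ℝ} (hxy : x * y ≤ 0) (hx : |x - z| < ε) (hy : |y - z| < ε) :
    |z| < ε := by
  rw [abs_lt] at *
  rcases mul_nonpos_iff.1 hxy with h | h <;> constructor <;> linarith

namespace OrderedChain

variable {E : Type*} {n : ℕ}

theorem finite_signChanges [Neg E] (l : List E) : (signChanges l).Finite := by
  induction l with
  | nil => exact (finite_singleton []).subset fun l' hl' => List.forall₂_nil_right_iff.1 hl'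
  | cons v l ih =>
    refine (((finite_singleton (-v)).insert v).image2 List.cons ih).subset fun l' hl' => ?_
    obtain ⟨w, l'', hw, hl'', rfl⟩ := List.forall₂_cons_right_iff.1 hl'
    exact mem_image2_of_mem hw hl''

theorem zero_notMem_convexHull_signChanges [AddCommGroup E] [Module ℝ E]
    (b : Module.Basis (Fin n) ℝ E) {l : List E} (hl : l ∈ signChanges (List.ofFn b)) :
    (0 : E) ∉ convexHull ℝ {v | v ∈ l} := by
  have hlen : l.length = n := by simpa using List.Forall₂.length_eq hl
  have hsign (i : Fin n) : ∃ ε : ℝ, ε * ε = 1 ∧ l[i] = ε • b i := by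
    have hi := (List.forall₂_iff_get.1 hl).2 i (by omega) (by simp)
    rcases hi with h | h
    · exact ⟨1, by norm_num, by simpa using h⟩
    · exact ⟨-1, by norm_num, by simpa using h⟩
  choose ε hε hlε using hsign
  have hull_subset : convexHull ℝ {v | v ∈ l} ⊆ {v | b.constr ℝ ε v = 1} := by
    refine convexHull_min (fun v hv => ?_) (convex_hyperplane (b.constr ℝ ε).isLinear 1)
    obtain ⟨i, hi, rfl⟩ := List.mem_iff_getElem.1 hv
    have hli := hlε ⟨i, hlen ▸ hi⟩
    simp only [Fin.getElem_fin] at hli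
    rw [Set.mem_ofPred_eq, hli, map_smul, Module.Basis.constr_basis, smul_eq_mul, hε]
  exact fun h => by simpa using hull_subset h

end OrderedChain

open OrderedChain in
theorem exists_ne_zero_map_eq_zero_of_odd {E : Type*} [NormedAddCommGroup E] [NormedSpace ℝ E]
    [FiniteDimensional ℝ E] {m : ℕ} (hm : m < Module.finrank ℝ E) {h : E → Fin m → ℝ}
    (hc : ContinuousOn h {0}ᶜ) (hodd : ∀ v ≠ 0, h (-v) = -h v) : ∃ v ≠ 0, h v = 0 := by
  by_contra! hne
  let b := Module.finBasis ℝ E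
  let K : Set E := ⋃ l ∈ signChanges (List.ofFn b), convexHull ℝ {v | v ∈ l}
  have hK : IsCompact K :=
    (finite_signChanges _).isCompact_biUnion fun l _ => l.finite_toSet.isCompact_convexHull ℝ
  have hK0 : K ⊆ {0}ᶜ := iUnion₂_subset fun l hl =>
    subset_compl_singleton_iff.2 (zero_notMem_convexHull_signChanges b hl)
  obtain ⟨μ, hμ, hμK⟩ : ∃ μ > 0, ∀ v ∈ K, μ ≤ ‖h v‖ :=
    hK.exists_forall_le' (hc.mono hK0).norm fun v hv => norm_pos_iff.2 (hne v (hK0 hv))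
  obtain ⟨δ, hδ, hδK⟩ := Metric.uniformContinuousOn_iff.1
    (hK.uniformContinuousOn_of_continuous (hc.mono hK0)) μ hμ
  let coord (i : ℕ) (v : E) : ℝ := if hi : i < m then h v ⟨i, hi⟩ else 0
  let label (i : ℕ) (v : E) : ZMod 2 := signParity (toLex (coord i v, toLex (b.equivFun v)))
  have label_neg (i : ℕ) (v : E) (hv : v ≠ 0) : label i (-v) = label i v + 1 := by
    have hcoord : coord i (-v) = -coord i v := by
      by_cases hi : i < m <;> simp [coord, hi, hodd v hv]
    have hlex : toLex (coord i v, toLex (b.equivFun v)) ≠ 0 := fun h0 =>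
      hv (b.equivFun.map_eq_zero_iff.1 (congrArg Prod.snd h0))
    rw [← signParity_neg hlex]
    simp only [label, hcoord, map_neg]
    rfl
  obtain ⟨l₀, hl₀, l, ⟨hlen, hmem, hdist⟩, hsep⟩ := exists_small_simplex_separated label_neg
    (l := List.ofFn b) (List.ne_nil_of_length_pos (by simp; omega))
    (fun l hl => zero_notMem_convexHull_signChanges b hl) (half_pos hδ)
  rw [List.length_ofFn] at hlen hsep
  have hlK (v : E) (hv : v ∈ l) : v ∈ K := mem_biUnion hl₀ (hmem v hv)
  obtain ⟨v, hv⟩ := List.exists_mem_of_length_pos (l := l) (by omega)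
  have hclose (u : E) (hu : u ∈ l) (i : Fin m) : |h u i - h v i| < μ :=
    (dist_le_pi_dist (h u) (h v) i).trans_lt
      (hδK u (hlK u hu) v (hlK v hv) ((hdist u hu v hv).trans_lt (half_lt_self hδ)))
  refine (hμK v (hlK v hv)).not_gt ((pi_norm_lt_iff hμ).2 fun i => ?_)
  obtain ⟨u, hu, w, hw, huw⟩ := hsep i (by omega)
  have hmul := mul_nonpos_of_signParity_toLex_ne huw
  simp only [coord, i.2, dif_pos] at hmul
  exact abs_lt_of_mul_nonpos hmul (hclose u hu i) (hclose w hw i)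

theorem borsuk_ulam {E F : Type*} [NormedAddCommGroup E] [NormedSpace ℝ E] [FiniteDimensional ℝ E]
    [NormedAddCommGroup F] [NormedSpace ℝ F] [FiniteDimensional ℝ F]
    (hEF : Module.finrank ℝ F < Module.finrank ℝ E) {f : E → F}
    (hf : ContinuousOn f (Metric.sphere 0 1)) : ∃ v ∈ Metric.sphere (0 : E) 1, f v = f (-v) := by
  let L : F ≃L[ℝ] (Fin (Module.finrank ℝ F) → ℝ) := .ofFinrankEq (by simp)
  let radial (v : E) : E := ‖v‖⁻¹ • v
  have radial_mem (v : E) (hv : v ≠ 0) : radial v ∈ Metric.sphere (0 : E) 1 := by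
    simp [radial, norm_smul, hv]
  have radial_cont : ContinuousOn radial {0}ᶜ :=
    (continuousOn_id.norm.inv₀ fun v hv => norm_ne_zero_iff.2 hv).smul continuousOn_id
  obtain ⟨v, hv, hzero⟩ := exists_ne_zero_map_eq_zero_of_odd hEF
    (h := fun v => L (f (radial v) - f (-radial v)))
    (L.continuous.comp_continuousOn <| (hf.comp radial_cont radial_mem).sub
      (hf.comp radial_cont.neg fun v hv => by simpa using radial_mem v hv))
    (fun v _ => by simp [radial])
  exact ⟨radial v, radial_mem v hv, sub_eq_zero.1 (L.map_eq_zero_iff.1 hzero)⟩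

/-! ### Powers of the tripod -/

section Tripod

instance : Nonempty TripodSet := ⟨⟨0, by simp [TripodSet]⟩⟩

instance : CompactSpace TripodSet := by
  refine isCompact_iff_compactSpace.1 (IsCompact.of_isClosed_subset
    (isCompact_univ_pi fun _ : Fin 3 => isCompact_Icc (a := (0 : ℝ)) (b := 1)) ?_
    fun x hx i _ => hx.1 i)
  have hclosed : IsClosed {x : Fin 3 → ℝ | (∀ i, 0 ≤ x i ∧ x i ≤ 1) ∧
      ∀ i j, i ≠ j → x i = 0 ∨ x j = 0} := by
    simp only [ofPred_and, ofPred_forall, ofPred_or]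
    refine .inter (isClosed_iInter fun i => .inter ?_ ?_) <|
      isClosed_iInter fun i => isClosed_iInter fun j => isClosed_iInter fun _ => .union ?_ ?_
    · exact isClosed_le continuous_const (continuous_apply i)
    · exact isClosed_le (continuous_apply i) continuous_const
    · exact isClosed_eq (continuous_apply i) continuous_const
    · exact isClosed_eq (continuous_apply j) continuous_const
  exact hclosed

/-- Signed coordinates on the three sectors of the plane that are collapsed onto the three legs of
the tripod; at most one of them is positive. -/
noncomputable def sectorCoord (a b : ℝ) : Fin 3 → ℝ
  | 0 => a - max b 0
  | 1 => b - max a 0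
  | 2 => -max a b

theorem sectorCoord_nonpos_or_nonpos (a b : ℝ) {i j : Fin 3} (hij : i ≠ j) :
    sectorCoord a b i ≤ 0 ∨ sectorCoord a b j ≤ 0 := by
  fin_cases i <;> fin_cases j <;> grind [sectorCoord]

/-- The map of the plane to the tripod collapsing each sector onto its leg. -/
noncomputable def tripodPoint (a b : ℝ) : TripodSet :=
  ⟨fun i => projIcc (0 : ℝ) 1 zero_le_one (sectorCoord a b i), fun _ => Subtype.prop _,
    fun _ _ hij => (sectorCoord_nonpos_or_nonpos a b hij).imp
      (fun h => congrArg Subtype.val (projIcc_of_le_left _ h))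
      fun h => congrArg Subtype.val (projIcc_of_le_left _ h)⟩

theorem continuous_tripodPoint : Continuous fun p : ℝ × ℝ => tripodPoint p.1 p.2 := by
  refine Continuous.subtype_mk (continuous_pi fun i =>
    continuous_subtype_val.comp (continuous_projIcc.comp ?_)) _
  fin_cases i <;> unfold sectorCoord <;> fun_prop

theorem half_le_abs_sub_projIcc {x y : ℝ} (hx : 1 / 2 ≤ x) (hy : y ≤ 0) :
    1 / 2 ≤ |(projIcc (0 : ℝ) 1 zero_le_one x : ℝ) - projIcc (0 : ℝ) 1 zero_le_one y| := by
  rw [projIcc_of_le_left _ hy, coe_projIcc, sub_zero]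
  exact (le_max_of_le_right (le_min (by norm_num) hx)).trans (le_abs_self _)

theorem half_le_dist_tripodPoint_neg {a b : ℝ} (h : |a| = 1 ∨ |b| = 1) :
    1 / 2 ≤ dist (tripodPoint a b) (tripodPoint (-a) (-b)) := by
  obtain ⟨i, hi⟩ : ∃ i, (1 / 2 ≤ sectorCoord a b i ∧ sectorCoord (-a) (-b) i ≤ 0) ∨
      (1 / 2 ≤ sectorCoord (-a) (-b) i ∧ sectorCoord a b i ≤ 0) := by
    by_contra! hcon
    have h₀ := hcon 0
    have h₁ := hcon 1
    have h₂ := hcon 2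
    simp only [sectorCoord] at h₀ h₁ h₂
    rcases h with h | h <;> obtain rfl | rfl := eq_or_eq_neg_of_abs_eq h <;> grind
  refine le_trans ?_ (dist_le_pi_dist (tripodPoint a b).1 (tripodPoint (-a) (-b)).1 i)
  rcases hi with hi | hi
  · exact half_le_abs_sub_projIcc hi.1 hi.2
  · rw [dist_comm]
    exact half_le_abs_sub_projIcc hi.1 hi.2

theorem exists_abs_apply_eq_norm {ι : Type*} [Fintype ι] {v : ι → ℝ} (hv : v ≠ 0) :
    ∃ i, |v i| = ‖v‖ := by
  obtain ⟨i₀, -⟩ := Function.ne_iff.1 hv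
  obtain ⟨i, -, hi⟩ := Finset.exists_max_image .univ (fun i => |v i|) ⟨i₀, Finset.mem_univ i₀⟩
  exact ⟨i, (norm_le_pi_norm v i).antisymm <|
    (pi_norm_le_iff_of_nonneg (abs_nonneg _)).2 fun j => hi j (Finset.mem_univ j)⟩

theorem exists_eq_half_le_dist_tripod {J F : Type*} [Fintype J] [NormedAddCommGroup F]
    [NormedSpace ℝ F] [FiniteDimensional ℝ F] (hF : Module.finrank ℝ F < 2 * Fintype.card J)
    {Φ : (J → TripodSet) → F} (hΦ : Continuous Φ) :
    ∃ y y', Φ y = Φ y' ∧ ∃ j, 1 / 2 ≤ dist (y j) (y' j) := by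
  let fold (v : J × Bool → ℝ) (j : J) : TripodSet := tripodPoint (v (j, true)) (v (j, false))
  have hfold : Continuous fold := continuous_pi fun j => continuous_tripodPoint.comp
    (f := fun v : J × Bool → ℝ => (v (j, true), v (j, false))) (by fun_prop)
  obtain ⟨v, hv, heq⟩ := borsuk_ulam (E := J × Bool → ℝ) (by simpa [mul_comm] using hF)
    (hΦ.comp hfold).continuousOn
  have hnorm : ‖v‖ = 1 := mem_sphere_zero_iff_norm.1 hv
  obtain ⟨⟨j, _ | _⟩, hj⟩ := exists_abs_apply_eq_norm (v := v) (by rintro rfl; simp at hnorm)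
  · exact ⟨fold v, fold (-v), heq, j, half_le_dist_tripodPoint_neg (.inr (hj.trans hnorm))⟩
  · exact ⟨fold v, fold (-v), heq, j, half_le_dist_tripodPoint_neg (.inl (hj.trans hnorm))⟩

end Tripod

/-! ### Widths of polyhedra -/

theorem exists_linearMap_disjoint_ker {𝕜 E ι : Type*} [Field 𝕜] [Infinite 𝕜] [AddCommGroup E]
    [Module 𝕜 E] [FiniteDimensional 𝕜 E] [Finite ι] (V : ι → Submodule 𝕜 E) {r : ℕ}
    (hV : ∀ i, Module.finrank 𝕜 (V i) ≤ r) :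
    ∃ L : E →ₗ[𝕜] (Fin r → 𝕜), ∀ i, Disjoint (V i) L.ker := by
  induction hn : Module.finrank 𝕜 E using Nat.strong_induction_on generalizing E with
  | _ n ih =>
  by_cases hr : n ≤ r
  · obtain ⟨L, hL⟩ := (finrank_le_iff_exists_linearMap (R := 𝕜) (M := E)
      (M' := Fin r → 𝕜)).1 (by simpa [hn] using hr)
    exact ⟨L, fun i => by simp [LinearMap.ker_eq_bot.2 hL]⟩
  have hproper (i : ι) : V i ≠ ⊤ := by
    intro hi
    have := hV i
    rw [hi, finrank_top] at this
    omega
  obtain ⟨v, hv0, hv⟩ : ∃ v ≠ 0, ∀ i, v ∉ V i := by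
    have := Module.nontrivial_of_finrank_pos (R := 𝕜) (M := E) (by omega)
    by_contra! hcon
    obtain ⟨_ | i, hi⟩ := Subspace.exists_eq_top_of_iUnion_eq_univ
      (p := fun o : Option ι => o.elim ⊥ V) <| eq_univ_of_forall fun v => mem_iUnion.2 <| by
        obtain rfl | hv := eq_or_ne v 0
        · exact ⟨none, Submodule.zero_mem _⟩
        · exact (hcon v hv).imp' some fun _ => id
    · exact bot_ne_top hi
    · exact hproper i hi
  obtain ⟨L, hL⟩ := ih _ (E := E ⧸ 𝕜 ∙ v) (by
      have := (𝕜 ∙ v).finrank_quotient_add_finrank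
      rw [finrank_span_singleton hv0] at this
      omega) (fun i => (V i).map (𝕜 ∙ v).mkQ)
    (fun i => (Submodule.finrank_map_le _ _).trans (hV i)) rfl
  refine ⟨L ∘ₗ (𝕜 ∙ v).mkQ, fun i => Submodule.disjoint_def.2 fun x hx hLx => ?_⟩
  have hmk : (𝕜 ∙ v).mkQ x = 0 :=
    Submodule.disjoint_def.1 (hL i) _ (Submodule.mem_map_of_mem hx) hLx
  obtain ⟨c, rfl⟩ := Submodule.mem_span_singleton.1 ((Submodule.Quotient.mk_eq_zero _).1 hmk)
  obtain rfl | hc := eq_or_ne c 0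
  · exact zero_smul _ _
  · exact absurd (((V i).smul_mem_iff hc).1 hx) (hv i)

theorem finrank_vectorSpan_finset_union_le {E : Type*} [AddCommGroup E] [Module ℝ E]
    [DecidableEq E] {s t : Finset E} {k : ℕ} (hs : s.card ≤ k + 1) (ht : t.card ≤ k + 1)
    (hne : s.Nonempty) :
    Module.finrank ℝ (vectorSpan ℝ ((s ∪ t : Finset E) : Set E)) ≤ 2 * k + 1 := by
  have hpos : 0 < (s ∪ t).card := Finset.card_pos.2 (hne.mono Finset.subset_union_left)
  have hle := finrank_vectorSpan_image_finset_le ℝ id (s ∪ t) (n := (s ∪ t).card - 1) (by omega)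
  rw [Finset.image_id] at hle
  have := Finset.card_union_le s t
  omega

section Widim

variable {X : Type*} [TopologicalSpace X] {ρ : X → X → ℝ} {ε : ℝ} {k n : ℕ}

theorem WidimLE.widim_le (h : WidimLE X ρ ε n) : widim X ρ ε ≤ n := sInf_le ⟨n, rfl, h⟩

theorem le_widim (h : ∀ n, WidimLE X ρ ε n → k ≤ n) : (k : ℕ∞) ≤ widim X ρ ε :=
  le_sInf fun _ ⟨n, hkn, hn⟩ => hkn ▸ Nat.cast_le.2 (h n hn)

theorem WidimLE.exists_isEpsEmb_fin (h : WidimLE X ρ ε k) :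
    ∃ g : X → Fin (2 * k + 1) → ℝ, IsEpsEmb ρ ε g := by
  classical
  obtain ⟨N, P, hfin, hcard, f, hfc, hf⟩ := h
  have := hfin.to_subtype
  obtain ⟨L, hL⟩ := exists_linearMap_disjoint_ker
    (fun st : P.faces × P.faces =>
      vectorSpan ℝ ((st.1.1 ∪ st.2.1 : Finset (Fin N → ℝ)) : Set (Fin N → ℝ)))
    fun st => finrank_vectorSpan_finset_union_le (hcard _ st.1.2) (hcard _ st.2.2)
      (P.nonempty_of_mem_faces st.1.2)
  refine ⟨fun x => L (f x), L.continuous_of_finiteDimensional.comp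
    (continuous_subtype_val.comp hfc), fun x y hxy => hf x y (Subtype.ext (sub_eq_zero.1 ?_))⟩
  obtain ⟨s, hs, hxs⟩ := P.mem_space_iff.1 (f x).2
  obtain ⟨t, ht, hyt⟩ := P.mem_space_iff.1 (f y).2
  refine Submodule.disjoint_def.1 (hL (⟨s, hs⟩, ⟨t, ht⟩)) _ ?_ (LinearMap.sub_mem_ker_iff.2 hxy)
  rw [← direction_affineSpan]
  refine AffineSubspace.vsub_mem_direction (convexHull_subset_affineSpan (𝕜 := ℝ) _ ?_)
    (convexHull_subset_affineSpan (𝕜 := ℝ) _ ?_)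
  · exact convexHull_mono (Finset.coe_subset.2 Finset.subset_union_left) hxs
  · exact convexHull_mono (Finset.coe_subset.2 Finset.subset_union_right) hyt

theorem WidimLE.card_le_of_tripod {J : Type*} [Fintype J] (h : WidimLE X ρ ε k)
    {ψ : (J → TripodSet) → X} (hψ : Continuous ψ)
    (hρ : ∀ y y', (∃ j, 1 / 2 ≤ dist (y j) (y' j)) → ε ≤ ρ (ψ y) (ψ y')) :
    Fintype.card J ≤ k := by
  by_contra! hk
  obtain ⟨g, hg, hsmall⟩ := h.exists_isEpsEmb_fin
  obtain ⟨y, y', heq, hsep⟩ := exists_eq_half_le_dist_tripod (J := J)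
    (F := Fin (2 * k + 1) → ℝ) (by rw [Module.finrank_fin_fun]; omega) (hg.comp hψ)
  exact (hρ y y' hsep).not_gt (hsmall _ _ heq)

/-- The `n`-skeleton of the standard simplex with vertex set `Fin N`. -/
noncomputable def standardSkeleton (N n : ℕ) : Geometry.SimplicialComplex ℝ (Fin N → ℝ) :=
  .ofAffineIndependent
    { faces := {s | s.Nonempty ∧ (s : Set (Fin N → ℝ)) ⊆ range (Pi.basisFun ℝ (Fin N)) ∧
        s.card ≤ n + 1}
      isRelLowerSet_faces := fun _ hs => ⟨hs.1, fun _ hts ht =>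
        ⟨ht, (Finset.coe_subset.2 hts).trans hs.2.1, (Finset.card_le_card hts).trans hs.2.2⟩⟩ } <|
    (Pi.basisFun ℝ (Fin N)).linearIndependent.affineIndependent.range.mono <|
      iUnion₂_subset fun _ hs => hs.2.1

theorem mem_standardSkeleton_faces {N : ℕ} {s : Finset (Fin N → ℝ)} :
    s ∈ (standardSkeleton N n).faces ↔
      s.Nonempty ∧ (s : Set (Fin N → ℝ)) ⊆ range (Pi.basisFun ℝ (Fin N)) ∧ s.card ≤ n + 1 :=
  Iff.rfl

theorem finite_standardSkeleton_faces (N n : ℕ) : (standardSkeleton N n).faces.Finite :=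
  (finite_range (Pi.basisFun ℝ (Fin N))).finite_subsets.preimage
    Finset.coe_injective.injOn |>.subset fun _ hs => hs.2.1

theorem mem_standardSkeleton_space {N : ℕ} {w : Fin N → ℝ} (hw : w ∈ stdSimplex ℝ (Fin N))
    {T : Finset (Fin N)} (hT : T.card ≤ n + 1) (hwT : ∀ i ∉ T, w i = 0) :
    w ∈ (standardSkeleton N n).space := by
  classical
  let e := Pi.basisFun ℝ (Fin N)
  have hsum : ∑ i ∈ T, w i = 1 :=
    (Finset.sum_subset (Finset.subset_univ _) fun i _ => hwT i).trans hw.2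
  have hne : T.Nonempty := Finset.nonempty_of_sum_ne_zero (hsum ▸ one_ne_zero)
  have hcomb : w = ∑ i ∈ T, w i • e i := by
    rw [Finset.sum_subset (Finset.subset_univ _) fun i _ hi => by rw [hwT i hi, zero_smul]]
    exact (e.sum_repr w).symm
  refine Geometry.SimplicialComplex.mem_space_iff.2 ⟨T.image e,
    mem_standardSkeleton_faces.2 ⟨hne.image e, ?_, Finset.card_image_le.trans hT⟩, ?_⟩
  · rw [Finset.coe_image]
    exact image_subset_range _ _
  · rw [hcomb]
    exact (convex_convexHull ℝ _).sum_mem (fun i _ => hw.1 i) hsum fun i hi =>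
      subset_convexHull ℝ _ (Finset.mem_coe.2 (Finset.mem_image_of_mem _ hi))

theorem WidimLE.of_weights {V : Type*} [Fintype V] {w : X → V → ℝ} (hw : Continuous w)
    (hmem : ∀ x, w x ∈ stdSimplex ℝ V)
    (hsupp : ∀ x, ∃ T : Finset V, T.card ≤ n + 1 ∧ ∀ v ∉ T, w x v = 0)
    (hρ : ∀ x x', w x = w x' → ρ x x' < ε) : WidimLE X ρ ε n := by
  let τ := Fintype.equivFin V
  have hspace (x : X) : w x ∘ τ.symm ∈ (standardSkeleton (Fintype.card V) n).space := by
    obtain ⟨T, hT, hT0⟩ := hsupp x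
    refine mem_standardSkeleton_space (T := T.map τ.toEmbedding)
      ⟨fun i => (hmem x).1 _, (τ.symm.sum_comp _).trans (hmem x).2⟩ (by simpa using hT)
      fun i hi => hT0 _ fun h => hi ?_
    simpa using Finset.mem_map_of_mem τ.toEmbedding h
  refine ⟨_, _, finite_standardSkeleton_faces _ n,
    fun s hs => (mem_standardSkeleton_faces.1 hs).2.2, fun x => ⟨_, hspace x⟩, ?_,
    fun x x' h => hρ x x' (τ.symm.surjective.injective_comp_right (Subtype.ext_iff.1 h))⟩
  exact Continuous.subtype_mk (continuous_pi fun i => (continuous_apply _).comp hw) _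

theorem WidimLE.of_label_coord {I Q : Type*} [Finite I] [Finite Q] {p : X → Q}
    (hp : IsLocallyConstant p) {y : X → I → ℝ} (hy : Continuous y)
    (hmem : ∀ x i, y x i ∈ Icc (0 : ℝ) 1)
    (hsupp : ∀ x, ∃ T : Finset I, T.card ≤ n ∧ ∀ i ∉ T, y x i = 0)
    (hρ : ∀ x x', p x = p x' → y x = y x' → ρ x x' < ε) : WidimLE X ρ ε n := by
  classical
  have := Fintype.ofFinite I
  have := Fintype.ofFinite Q
  let c : ℝ := (Fintype.card I + 1 : ℝ)⁻¹
  have hc : 0 < c := by positivity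
  have hrest (x : X) : 0 < 1 - ∑ i, c * y x i := by
    have hle : ∑ i, c * y x i ≤ Fintype.card I * c := by
      simpa using Finset.sum_le_card_nsmul Finset.univ _ c fun i _ =>
        mul_le_of_le_one_right hc.le (hmem x i).2
    have hlt : Fintype.card I * c < 1 := by
      rw [← div_eq_mul_inv, div_lt_one (by positivity)]
      linarith
    linarith
  let w (x : X) : I ⊕ Q → ℝ :=
    Sum.elim (fun i => c * y x i) (Pi.single (p x) (1 - ∑ i, c * y x i))
  refine WidimLE.of_weights (w := w) (continuous_pi ?_) (fun x => ⟨?_, ?_⟩) (fun x => ?_)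
    fun x x' h => ?_
  · rintro (i | q)
    · exact continuous_const.mul ((continuous_apply i).comp hy)
    · simp only [w, Sum.elim_inr, Pi.single_apply, eq_comm (a := q)]
      have hfiber : frontier {x | p x = q} = ∅ := (hp.isClopen_fiber q).frontier_eq
      exact .if (fun x hx => by simp [hfiber] at hx) (by fun_prop) continuous_const
  · rintro (i | q)
    · exact mul_nonneg hc.le (hmem x i).1
    · exact Pi.single_nonneg (α := fun _ : Q => ℝ) |>.2 (hrest x).le q
  · simp [w]
  · obtain ⟨T, hT, hT0⟩ := hsupp x
    refine ⟨T.disjSum {p x}, by simpa using hT, ?_⟩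
    rintro (i | q) hv
    · simp [w, hT0 i (by simpa using hv)]
    · simp [w, show q ≠ p x by simpa using hv]
  · have hy' : y x = y x' := funext fun i => mul_left_cancel₀ hc.ne' (congrFun h (.inl i))
    refine hρ x x' ?_ hy'
    by_contra hne
    have hw : w x (.inr (p x)) = w x' (.inr (p x)) := congrFun h _
    simp only [w, Sum.elim_inr, Pi.single_eq_same, Pi.single_eq_of_ne hne] at hw
    exact (hrest x).ne' hw

end Widim

theorem exists_finset_forall_notMem_imp_dist_lt {X ι : Type*} [MetricSpace X] [CompactSpace X]
    {U : ι → Set (X × X)} (hU : ∀ i, IsOpen (U i))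
    (hsep : ∀ x x', x ≠ x' → ∃ i, (x, x') ∈ U i) {ε : ℝ} (hε : 0 < ε) :
    ∃ t : Finset ι, ∀ x x', (∀ i ∈ t, (x, x') ∉ U i) → dist x x' < ε := by
  have hcl : IsClosed {q : X × X | ε ≤ dist q.1 q.2} :=
    isClosed_le continuous_const continuous_dist
  obtain ⟨t, ht⟩ := hcl.isCompact.elim_finite_subcover U hU fun q hq =>
    mem_iUnion.2 (hsep _ _ (dist_pos.1 (hε.trans_le hq)))
  refine ⟨t, fun x x' h => ?_⟩
  by_contra! hcon
  obtain ⟨i, hi, hxi⟩ := mem_iUnion₂.1 (@ht (x, x') hcon)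
  exact h i hi hxi

section DynDist

variable {G X : Type*} [Group G] [PseudoMetricSpace X] {φ : G → X → X} {F : Finset G}

theorem dist_le_dynDist {g : G} (hg : g ∈ F) (x x' : X) :
    dist (φ g x) (φ g x') ≤ dynDist φ (F : Set G) x x' :=
  le_csSup (F.finite_toSet.image _).bddAbove ⟨g, hg, rfl⟩

theorem dynDist_lt {ε : ℝ} (hε : 0 < ε) {x x' : X} (h : ∀ g ∈ F, dist (φ g x) (φ g x') < ε) :
    dynDist φ (F : Set G) x x' < ε := by
  obtain rfl | hF := F.eq_empty_or_nonempty
  · simpa [dynDist] using hε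
  · exact ((F.finite_toSet.image _).csSup_lt_iff (hF.to_set.image _)).2 (forall_mem_image.2 h)

end DynDist

section MdimAlong

variable {G X : Type*} [Group G] [PseudoMetricSpace X] {φ : G → X → X} {F : ℕ → Finset G} {a : ℝ}

theorem ofReal_le_mdimAlong {ε : ℝ} (hε : 0 < ε) (hF : ∀ n, (F n).Nonempty)
    (h : ∀ n, ∃ m : ℕ, a * (F n).card ≤ m ∧ (m : ℕ∞) ≤ widim X (dynDist φ (F n)) ε) :
    ENNReal.ofReal a ≤ mdimAlong φ fun n => (F n : Set G) := by
  refine le_iSup_of_le ⟨ε, hε⟩ (le_limsup_of_frequently_le (.of_forall fun n => ?_))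
  obtain ⟨m, ham, hm⟩ := h n
  rw [ncard_coe_finset, ENNReal.le_div_iff_mul_le
    (Or.inl (Nat.cast_ne_zero.2 (hF n).card_pos.ne')) (Or.inl (ENNReal.natCast_ne_top _))]
  calc ENNReal.ofReal a * (F n).card
      = ENNReal.ofReal (a * (F n).card) := by
        rw [ENNReal.ofReal_mul' (Nat.cast_nonneg _), ENNReal.ofReal_natCast]
    _ ≤ m := ENNReal.ofReal_le_of_le_toReal (by simpa using ham)
    _ ≤ _ := by simpa using ENat.toENNReal_le.2 hm

theorem mdimAlong_le_ofReal
    (h : ∀ ε > 0, ∀ δ > 0, ∀ᶠ n in atTop, ∃ m : ℕ,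
      (m : ℝ) ≤ (a + δ) * (F n).card ∧ WidimLE X (dynDist φ (F n)) ε m) :
    mdimAlong φ (fun n => (F n : Set G)) ≤ ENNReal.ofReal a := by
  refine iSup_le fun ε => ENNReal.le_of_forall_pos_le_add fun δ hδ _ => ?_
  refine limsup_le_of_le (by isBoundedDefault) ?_
  filter_upwards [h ε ε.2 δ hδ] with n ⟨m, hma, hm⟩
  refine ENNReal.div_le_of_le_mul ?_
  calc ((widim X (dynDist φ (F n)) ε : ℕ∞) : ℝ≥0∞)
      ≤ ENNReal.ofReal m := by simpa using ENat.toENNReal_le.2 hm.widim_le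
    _ ≤ ENNReal.ofReal ((a + δ) * (F n).card) := ENNReal.ofReal_le_ofReal hma
    _ = ENNReal.ofReal (a + δ) * (F n).card := by
        rw [ENNReal.ofReal_mul' (Nat.cast_nonneg _), ENNReal.ofReal_natCast]
    _ ≤ (ENNReal.ofReal a + δ) * ((F n : Set G).ncard : ℝ≥0∞) := by
        rw [ncard_coe_finset]
        gcongr
        simpa using ENNReal.ofReal_add_le (p := a) (q := δ)

end MdimAlong

/-! ### A free minimal action on a zero-dimensional space -/

section Minimal

variable {M X : Type*} [Monoid M] [TopologicalSpace X] [MulAction M X] [ContinuousConstSMul M X]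

instance (p : SubMulAction M X) : ContinuousConstSMul M p :=
  ⟨fun c => ((continuous_const_smul c).comp continuous_subtype_val).subtype_mk _⟩

theorem exists_minimal_subMulAction_le [CompactSpace X] {p : SubMulAction M X}
    (hp : IsClosed (p : Set X)) (hne : (p : Set X).Nonempty) :
    ∃ q ≤ p, IsClosed (q : Set X) ∧ Nonempty q ∧ MulAction.IsMinimal M q := by
  let 𝒮 : Set (Set X) := {s | IsClosed s ∧ s.Nonempty ∧ ∀ (c : M), ∀ x ∈ s, c • x ∈ s}
  obtain ⟨s, hsp, ⟨hs, hsne, hsmul⟩, hmin⟩ := zorn_superset_nonempty 𝒮 (fun c hc hchain hcne => by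
    refine ⟨⋂₀ c, ⟨isClosed_sInter fun s hs => (hc hs).1, ?_,
      fun g x hx s hs => (hc hs).2.2 g x (hx s hs)⟩, fun s hs => sInter_subset_of_mem hs⟩
    have := hcne.to_subtype
    exact IsCompact.nonempty_sInter_of_directed_nonempty_isCompact_isClosed
      (fun a ha b hb => (hchain.total ha hb).elim (fun h => ⟨a, ha, subset_rfl, h⟩)
        fun h => ⟨b, hb, h, subset_rfl⟩) (fun s hs => (hc hs).2.1) (fun s hs => (hc hs).1.isCompact)
      fun s hs => (hc hs).1) p ⟨hp, hne, fun c _ => p.smul_mem c⟩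
  let q : SubMulAction M X := ⟨s, fun c _ => hsmul c _⟩
  refine ⟨q, hsp, hs, hsne.to_subtype, (isMinimal_iff_isClosed_smul_invariant M).2
    fun t ht htsmul => t.eq_empty_or_nonempty.imp_right fun htne => ?_⟩
  have hle : s ⊆ Subtype.val '' t := hmin ⟨hs.isClosedEmbedding_subtypeVal.isClosedMap _ ht,
    htne.image _, fun c => forall_mem_image.2 fun x hx =>
      ⟨c • x, htsmul c (smul_mem_smul_set hx), rfl⟩⟩ (Subtype.coe_image_subset _ _)
  exact eq_univ_of_forall fun x => (Subtype.val_injective.mem_set_image).1 (hle x.2)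

end Minimal

theorem exists_fin_three_coloring {α : Type*} {e : Equiv.Perm α} (he : ∀ a, e a ≠ a) :
    ∃ c : α → Fin 3, ∀ a, c (e a) ≠ c a := by
  classical
  have hthird : ∀ i j : Fin 3, ∃ k, k ≠ i ∧ k ≠ j := by decide
  choose third hleft hright using hthird
  let r : α → α → Prop := WellOrderingRel
  let c : α → Fin 3 := IsWellFounded.fix r fun a c =>
    third (if h : r (e a) a then c _ h else 0) (if h : r (e.symm a) a then c _ h else 0)
  have hc (a : α) : c a = third (if r (e a) a then c (e a) else 0)
      (if r (e.symm a) a then c (e.symm a) else 0) := IsWellFounded.fix_eq r _ a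
  refine ⟨c, fun a => ?_⟩
  rcases trichotomous_of r (e a) a with h | h | h
  · rw [hc a, if_pos h]
    exact (hleft _ _).symm
  · exact absurd h (he a)
  · rw [hc (e a), e.symm_apply_apply, if_pos h]
    exact hright _ _

/-- The set of configurations `G → K` as the underlying space of the full `G`-shift. It is a type
synonym since `G → K` already carries the pointwise action when `G` acts on `K`. -/
def FullShift (G K : Type*) := G → K

namespace FullShift

variable {G K : Type*} [TopologicalSpace K]

instance : TopologicalSpace (FullShift G K) := inferInstanceAs (TopologicalSpace (G → K))

instance [CompactSpace K] : CompactSpace (FullShift G K) :=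
  inferInstanceAs (CompactSpace (G → K))

instance [T2Space K] : T2Space (FullShift G K) := inferInstanceAs (T2Space (G → K))

instance [Countable G] [SecondCountableTopology K] : SecondCountableTopology (FullShift G K) :=
  inferInstanceAs (SecondCountableTopology (G → K))

instance [TotallyDisconnectedSpace K] : TotallyDisconnectedSpace (FullShift G K) :=
  inferInstanceAs (TotallyDisconnectedSpace (G → K))

theorem continuous_eval (h : G) : Continuous fun x : FullShift G K => x h := continuous_apply h

variable [Group G]

instance {K : Type*} : MulAction G (FullShift G K) where
  smul := shift
  one_smul _ := funext fun _ => congrArg _ (mul_one _)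
  mul_smul _ _ _ := funext fun _ => congrArg _ (mul_assoc _ _ _).symm

theorem smul_apply {K : Type*} (g : G) (x : FullShift G K) (h : G) : (g • x) h = x (h * g) := rfl

instance : ContinuousConstSMul G (FullShift G K) :=
  ⟨fun _ => continuous_pi fun _ => continuous_eval _⟩

end FullShift

section CayleyColorings

variable (G : Type*) [Group G]

/-- The subshift of all `z` such that each `h ↦ z h s` with `s ≠ 1` is a proper colouring of the
Cayley graph of `s`. -/
def cayleyColorings : SubMulAction G (FullShift G (G → Fin 3)) where
  carrier := {z | ∀ s ≠ 1, ∀ h, z (s * h) s ≠ z h s}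
  smul_mem' g z hz s hs h := by simpa only [FullShift.smul_apply, mul_assoc] using hz s hs (h * g)

theorem isClosed_cayleyColorings :
    IsClosed (cayleyColorings G : Set (FullShift G (G → Fin 3))) := by
  have : (cayleyColorings G : Set (FullShift G (G → Fin 3))) =
      ⋂ (s : G) (_ : s ≠ 1) (h : G), {z | z (s * h) s ≠ z h s} := by
    ext
    simp only [mem_iInter]
    rfl
  rw [this]
  refine isClosed_iInter fun s => isClosed_iInter fun _ => isClosed_iInter fun h =>
    (isClosed_discrete {p : Fin 3 × Fin 3 | p.1 ≠ p.2}).preimage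
      (f := fun z : FullShift G (G → Fin 3) => (z (s * h) s, z h s)) ?_
  exact .prodMk ((continuous_apply s).comp (FullShift.continuous_eval _))
    ((continuous_apply s).comp (FullShift.continuous_eval _))

theorem nonempty_cayleyColorings :
    (cayleyColorings G : Set (FullShift G (G → Fin 3))).Nonempty := by
  have (s : G) : ∃ c : G → Fin 3, s ≠ 1 → ∀ h, c (s * h) ≠ c h := by
    by_cases hs : s = 1
    · exact ⟨0, fun h => absurd hs h⟩
    · obtain ⟨c, hc⟩ := exists_fin_three_coloring (e := Equiv.mulLeft s) (by simpa using hs)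
      exact ⟨c, fun _ => hc⟩
  choose c hc using this
  exact ⟨fun h s => c s h, hc⟩

variable {G} in
theorem eq_one_of_smul_eq_of_mem_cayleyColorings {g : G} {z : FullShift G (G → Fin 3)}
    (hz : z ∈ cayleyColorings G) (hgz : g • z = z) : g = 1 := by
  by_contra hg
  refine hz g hg 1 ?_
  rw [mul_one, ← congrFun (congrFun hgz 1) g, FullShift.smul_apply, one_mul]

theorem exists_isMinimal_isCancelSMul : ∃ Z : SubMulAction G (FullShift G (G → Fin 3)),
    IsClosed (Z : Set (FullShift G (G → Fin 3))) ∧ Nonempty Z ∧ MulAction.IsMinimal G Z ∧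
      IsCancelSMul G Z := by
  obtain ⟨Z, hle, hcl, hne, hmin⟩ :=
    exists_minimal_subMulAction_le (isClosed_cayleyColorings G) (nonempty_cayleyColorings G)
  exact ⟨Z, hcl, hne, hmin, isCancelSMul_iff_eq_one_of_smul_eq.2 fun g z hgz =>
    eq_one_of_smul_eq_of_mem_cayleyColorings (hle z.2) (congrArg Subtype.val hgz)⟩

end CayleyColorings

/-! ### Densities of sets of visits -/

section Folner

open scoped Pointwise

variable {G : Type*} [Group G]

theorem IsFolnerSeq.exists_finset {F : ℕ → Set G} (hF : IsFolnerSeq F) :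
    ∃ F' : ℕ → Finset G, F = fun n => (F' n : Set G) := by
  choose F' hF' using fun n => (hF.1 n).1.exists_finset_coe
  exact ⟨F', funext fun n => (hF' n).symm⟩

variable {F : ℕ → Finset G}

theorem IsFolnerSeq.nonempty (hF : IsFolnerSeq fun n => (F n : Set G)) (n : ℕ) :
    (F n).Nonempty :=
  Finset.coe_nonempty.1 (hF.1 n).2

theorem IsFolnerSeq.card_pos (hF : IsFolnerSeq fun n => (F n : Set G)) (n : ℕ) :
    (0 : ℝ) < (F n).card :=
  Nat.cast_pos.2 (hF.nonempty n).card_pos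

variable [DecidableEq G]

theorem IsFolnerSeq.tendsto_card_sdiff_smul (hF : IsFolnerSeq fun n => (F n : Set G)) (g : G) :
    Tendsto (fun n => ((F n \ g • F n).card : ℝ) / (F n).card) atTop (𝓝 0) := by
  refine squeeze_zero (fun n => by positivity) (fun n => ?_) (hF.2 g)
  rw [ncard_coe_finset]
  gcongr
  rw [← ncard_coe_finset]
  refine ncard_le_ncard ?_ (((F n).finite_toSet.union ((F n).finite_toSet.image _)).subset
    symmDiff_subset_union)
  rw [Finset.coe_sdiff, Finset.coe_smul_finset]
  exact subset_union_left

theorem IsFolnerSeq.tendsto_sum_card_sdiff_smul (hF : IsFolnerSeq fun n => (F n : Set G))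
    (W : Finset G) :
    Tendsto (fun n => (∑ g ∈ W, ((F n \ g • F n).card : ℝ)) / (F n).card) atTop (𝓝 0) := by
  simpa only [Finset.sum_div, Finset.sum_const_zero] using
    tendsto_finsetSum W fun g _ => hF.tendsto_card_sdiff_smul g

theorem card_mul_le_add_sum_card_sdiff_smul (W F : Finset G) :
    (W * F).card ≤ F.card + ∑ g ∈ W, (F \ g • F).card := by
  have hsub : W * F ⊆ F ∪ W.biUnion fun g => g • F \ F := by
    intro x hx
    obtain ⟨w, hw, f, hf, rfl⟩ := Finset.mem_mul.1 hx
    by_cases h : w * f ∈ F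
    · exact Finset.mem_union_left _ h
    · exact Finset.mem_union_right _ (Finset.mem_biUnion.2
        ⟨w, hw, Finset.mem_sdiff.2 ⟨Finset.smul_mem_smul_finset hf, h⟩⟩)
  calc (W * F).card ≤ F.card + ∑ g ∈ W, (g • F \ F).card :=
        (Finset.card_le_card hsub).trans <| (Finset.card_union_le _ _).trans <|
          Nat.add_le_add_left Finset.card_biUnion_le _
    _ = F.card + ∑ g ∈ W, (F \ g • F).card := by
        simp only [Finset.card_sdiff_comm (Finset.card_smul_finset _ F)]

theorem IsFolnerSeq.eventually_card_mul_le (hF : IsFolnerSeq fun n => (F n : Set G))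
    (W : Finset G) {δ : ℝ} (hδ : 0 < δ) :
    ∀ᶠ n in atTop, ((W * F n).card : ℝ) ≤ (1 + δ) * (F n).card := by
  filter_upwards [(hF.tendsto_sum_card_sdiff_smul W).eventually_lt_const hδ] with n hn
  rw [div_lt_iff₀ (hF.card_pos n)] at hn
  have : ((W * F n).card : ℝ) ≤ (F n).card + ∑ g ∈ W, ((F n \ g • F n).card : ℝ) := by
    exact_mod_cast card_mul_le_add_sum_card_sdiff_smul W (F n)
  linarith

end Folner

section Density

variable {G Z : Type*}

section SMul

variable [SMul G Z] {F F' : Finset G} {C C' : Set Z} {z : Z} {g : G}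

open scoped Classical in
/-- The set of `g ∈ F` at which the orbit of `z` is in `C`. -/
noncomputable def visitTimes (F : Finset G) (C : Set Z) (z : Z) : Finset G :=
  {g ∈ F | g • z ∈ C}

theorem mem_visitTimes : g ∈ visitTimes F C z ↔ g ∈ F ∧ g • z ∈ C := by
  classical exact Finset.mem_filter

theorem visitTimes_subset : visitTimes F C z ⊆ F := fun _ hg => (mem_visitTimes.1 hg).1

theorem visitTimes_mono (hF : F ⊆ F') (hC : C ⊆ C') : visitTimes F C z ⊆ visitTimes F' C' z :=
  fun _ hg => mem_visitTimes.2 ((mem_visitTimes.1 hg).imp (@hF _) (@hC _))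

theorem card_visitTimes_union_le (F : Finset G) (C C' : Set Z) (z : Z) :
    (visitTimes F (C ∪ C') z).card ≤ (visitTimes F C z).card + (visitTimes F C' z).card := by
  classical
  refine (Finset.card_le_card fun g hg => ?_).trans (Finset.card_union_le _ _)
  obtain ⟨hg, h | h⟩ := mem_visitTimes.1 hg
  · exact Finset.mem_union_left _ (mem_visitTimes.2 ⟨hg, h⟩)
  · exact Finset.mem_union_right _ (mem_visitTimes.2 ⟨hg, h⟩)

/-- The maximal number of visits to `C` during `F`. -/
noncomputable def maxVisits (F : Finset G) (C : Set Z) : ℕ := ⨆ z, (visitTimes F C z).card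

theorem bddAbove_range_card_visitTimes (F : Finset G) (C : Set Z) :
    BddAbove (range fun z => (visitTimes F C z).card) :=
  ⟨F.card, forall_mem_range.2 fun _ => Finset.card_le_card visitTimes_subset⟩

theorem card_visitTimes_le_maxVisits (F : Finset G) (C : Set Z) (z : Z) :
    (visitTimes F C z).card ≤ maxVisits F C :=
  le_ciSup (bddAbove_range_card_visitTimes F C) z

theorem exists_card_visitTimes_eq_maxVisits [Nonempty Z] (F : Finset G) (C : Set Z) :
    ∃ z, (visitTimes F C z).card = maxVisits F C :=
  Nat.sSup_mem (range_nonempty _) (bddAbove_range_card_visitTimes F C)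

variable (G) in
/-- The upper (Banach) density of the set of visits to `C`, written as an infimum over all windows
so as not to involve a Følner sequence. -/
noncomputable def upperDensity (C : Set Z) : ℝ :=
  ⨅ F : {F : Finset G // F.Nonempty}, (maxVisits F.1 C : ℝ) / F.1.card

theorem upperDensity_mul_card_le (C : Set Z) (F : Finset G) :
    upperDensity G C * F.card ≤ maxVisits F C := by
  obtain rfl | hF := F.eq_empty_or_nonempty
  · simp
  · have hbdd : BddBelow (range fun F : {F : Finset G // F.Nonempty} =>
        (maxVisits F.1 C : ℝ) / F.1.card) := ⟨0, forall_mem_range.2 fun F => by positivity⟩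
    exact (le_div_iff₀ (Nat.cast_pos.2 hF.card_pos)).1 (ciInf_le hbdd ⟨F, hF⟩)

theorem exists_upperDensity_mul_card_le [Nonempty Z] (C : Set Z) (F : Finset G) :
    ∃ z, upperDensity G C * F.card ≤ (visitTimes F C z).card := by
  obtain ⟨z, hz⟩ := exists_card_visitTimes_eq_maxVisits F C
  exact ⟨z, hz ▸ upperDensity_mul_card_le C F⟩

theorem upperDensity_le [Nonempty Z] (hF : F.Nonempty) {a : ℝ}
    (h : ∀ z : Z, ((visitTimes F C z).card : ℝ) ≤ a * F.card) : upperDensity G C ≤ a := by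
  obtain ⟨z, hz⟩ := exists_upperDensity_mul_card_le C F
  exact le_of_mul_le_mul_right (hz.trans (h z)) (Nat.cast_pos.2 hF.card_pos)

end SMul

section Monoid

variable [Monoid G] [MulAction G Z]

instance : Nonempty {F : Finset G // F.Nonempty} := ⟨⟨{1}, Finset.singleton_nonempty 1⟩⟩

theorem le_upperDensity {C : Set Z} {a : ℝ} (h : ∀ F : Finset G, a * F.card ≤ maxVisits F C) :
    a ≤ upperDensity G C :=
  le_ciInf fun F => (le_div_iff₀ (Nat.cast_pos.2 F.2.card_pos)).2 (h F)

theorem upperDensity_nonneg (C : Set Z) : 0 ≤ upperDensity G C :=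
  le_upperDensity fun F => by simp

variable [Nonempty Z]

theorem upperDensity_mono {C C' : Set Z} (h : C ⊆ C') : upperDensity G C ≤ upperDensity G C' := by
  refine le_upperDensity fun F => ?_
  obtain ⟨z, hz⟩ := exists_upperDensity_mul_card_le C F
  exact hz.trans (Nat.cast_le.2 ((Finset.card_le_card (visitTimes_mono subset_rfl h)).trans
    (card_visitTimes_le_maxVisits F C' z)))

theorem one_le_upperDensity_univ : 1 ≤ upperDensity G (univ : Set Z) := by
  refine le_upperDensity fun F => ?_
  simpa [visitTimes] using card_visitTimes_le_maxVisits F univ (Classical.arbitrary Z)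

end Monoid

section Group

open scoped Pointwise

variable [Group G] [MulAction G Z]

theorem card_visitTimes_le_preimage_add [DecidableEq G] (F : Finset G) (C : Set Z) (z : Z)
    (g : G) :
    (visitTimes F C z).card ≤ (visitTimes F ((g • ·) ⁻¹' C) z).card + (F \ g • F).card := by
  rw [← Finset.card_smul_finset g (visitTimes F ((g • ·) ⁻¹' C) z)]
  refine (Finset.card_le_card fun f hf => ?_).trans (Finset.card_union_le _ _)
  obtain ⟨hfF, hfC⟩ := mem_visitTimes.1 hf
  by_cases h : f ∈ g • F
  · obtain ⟨f, hfF', rfl⟩ := Finset.mem_smul_finset.1 h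
    refine Finset.mem_union_left _ (Finset.smul_mem_smul_finset (mem_visitTimes.2 ⟨hfF', ?_⟩))
    rwa [smul_eq_mul, mul_smul] at hfC
  · exact Finset.mem_union_right _ (Finset.mem_sdiff.2 ⟨hfF, h⟩)

theorem sum_card_visitTimes_preimage_le (F₀ F : Finset G) (C : Set Z) (z : Z) :
    ∑ g ∈ F₀, (visitTimes F ((g • ·) ⁻¹' C) z).card ≤ maxVisits F₀ C * F.card := by
  simp only [visitTimes, Finset.card_filter]
  rw [Finset.sum_comm, mul_comm, ← smul_eq_mul]
  refine Finset.sum_le_card_nsmul _ _ _ fun f _ => ?_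
  refine le_of_eq_of_le ?_ (card_visitTimes_le_maxVisits F₀ C (f • z))
  simp only [visitTimes, Finset.card_filter]
  rfl

theorem card_mul_card_visitTimes_le [DecidableEq G] (F₀ F : Finset G) (C : Set Z) (z : Z) :
    F₀.card * (visitTimes F C z).card ≤
      maxVisits F₀ C * F.card + ∑ g ∈ F₀, (F \ g • F).card :=
  calc F₀.card * (visitTimes F C z).card = ∑ _g ∈ F₀, (visitTimes F C z).card := by
        rw [Finset.sum_const, smul_eq_mul]
    _ ≤ ∑ g ∈ F₀, (visitTimes F ((g • ·) ⁻¹' C) z).card + ∑ g ∈ F₀, (F \ g • F).card := by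
        rw [← Finset.sum_add_distrib]
        exact Finset.sum_le_sum fun g _ => card_visitTimes_le_preimage_add F C z g
    _ ≤ maxVisits F₀ C * F.card + ∑ g ∈ F₀, (F \ g • F).card :=
        Nat.add_le_add_right (sum_card_visitTimes_preimage_le F₀ F C z) _

variable {F : ℕ → Finset G}

theorem IsFolnerSeq.eventually_card_visitTimes_le (hF : IsFolnerSeq fun n => (F n : Set G))
    {C : Set Z} {a : ℝ} (ha : upperDensity G C < a) :
    ∀ᶠ n in atTop, ∀ z, ((visitTimes (F n) C z).card : ℝ) ≤ a * (F n).card := by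
  classical
  obtain ⟨⟨F₀, hF₀⟩, h₀ : (maxVisits F₀ C : ℝ) / F₀.card < a⟩ := exists_lt_of_ciInf_lt ha
  have hF₀pos : (0 : ℝ) < F₀.card := Nat.cast_pos.2 hF₀.card_pos
  have hgap : 0 < a * F₀.card - maxVisits F₀ C := sub_pos.2 ((div_lt_iff₀ hF₀pos).1 h₀)
  filter_upwards [(hF.tendsto_sum_card_sdiff_smul F₀).eventually_lt_const hgap] with n hn z
  rw [div_lt_iff₀ (hF.card_pos n)] at hn
  have hcard : (F₀.card : ℝ) * (visitTimes (F n) C z).card ≤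
      maxVisits F₀ C * (F n).card + ∑ g ∈ F₀, ((F n \ g • F n).card : ℝ) := by
    exact_mod_cast card_mul_card_visitTimes_le F₀ (F n) C z
  refine le_of_mul_le_mul_left (hcard.trans ?_) hF₀pos
  linarith

theorem IsFolnerSeq.eventually_card_visitTimes_mul_le [DecidableEq G]
    (hF : IsFolnerSeq fun n => (F n : Set G)) {W : Finset G} (hW : 1 ∈ W) {C : Set Z} {a : ℝ}
    (ha : upperDensity G C < a) :
    ∀ᶠ n in atTop, ∀ z, ((visitTimes (W * F n) C z).card : ℝ) ≤ a * (F n).card := by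
  obtain ⟨b, hCb, hba⟩ := exists_between ha
  filter_upwards [hF.eventually_card_visitTimes_le hCb,
    hF.eventually_card_mul_le W (sub_pos.2 hba)] with n hvisits hcard z
  have hsub : F n ⊆ W * F n := fun g hg => by simpa using Finset.mul_mem_mul hW hg
  have hle : (visitTimes (W * F n) C z).card + (F n).card ≤
      (visitTimes (F n) C z).card + (W * F n).card := by
    have hcover : visitTimes (W * F n) C z ⊆
        visitTimes (F n) C z ∪ (W * F n) \ F n := fun g hg => by
      obtain ⟨hgW, hgC⟩ := mem_visitTimes.1 hg
      by_cases h : g ∈ F n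
      · exact Finset.mem_union_left _ (mem_visitTimes.2 ⟨h, hgC⟩)
      · exact Finset.mem_union_right _ (Finset.mem_sdiff.2 ⟨hgW, h⟩)
    have := (Finset.card_le_card hcover).trans (Finset.card_union_le _ _)
    have := Finset.card_sdiff_add_card_eq_card hsub
    omega
  have : ((visitTimes (W * F n) C z).card : ℝ) + (F n).card ≤
      (visitTimes (F n) C z).card + (W * F n).card := by exact_mod_cast hle
  linarith [hvisits z]

theorem IsFolnerSeq.upperDensity_union_le [Nonempty Z]
    (hF : IsFolnerSeq fun n => (F n : Set G)) (C C' : Set Z) :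
    upperDensity G (C ∪ C') ≤ upperDensity G C + upperDensity G C' := by
  refine le_of_forall_pos_le_add fun ε hε => ?_
  obtain ⟨n, hC, hC'⟩ := ((hF.eventually_card_visitTimes_le
    (lt_add_of_pos_right (upperDensity G C) (half_pos hε))).and
    (hF.eventually_card_visitTimes_le
      (lt_add_of_pos_right (upperDensity G C') (half_pos hε)))).exists
  refine upperDensity_le (hF.nonempty n) fun z => ?_
  have hunion : ((visitTimes (F n) (C ∪ C') z).card : ℝ) ≤
      (visitTimes (F n) C z).card + (visitTimes (F n) C' z).card := by
    exact_mod_cast card_visitTimes_union_le (F n) C C' z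
  linarith [hC z, hC' z]

end Group

section Topology

variable [SMul G Z] [TopologicalSpace Z] [ContinuousConstSMul G Z]

theorem isClosed_setOf_le_card_visitTimes {C : Set Z} (hC : IsClosed C) (F : Finset G) (k : ℕ) :
    IsClosed {z | k ≤ (visitTimes F C z).card} := by
  have : {z | k ≤ (visitTimes F C z).card} =
      ⋃ T ∈ {T ∈ F.powerset | k ≤ T.card}, ⋂ g ∈ T, (g • ·) ⁻¹' C := by
    ext z
    simp only [Finset.mem_filter, Finset.mem_powerset, mem_iUnion, mem_iInter, mem_preimage,
      exists_prop]
    refine ⟨fun hz => ⟨_, ⟨visitTimes_subset, hz⟩, fun g hg => (mem_visitTimes.1 hg).2⟩, ?_⟩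
    rintro ⟨T, ⟨hTF, hk⟩, hT⟩
    exact hk.trans (Finset.card_le_card fun g hg => mem_visitTimes.2 ⟨hTF hg, hT g hg⟩)
  rw [this]
  exact isClosed_biUnion_finset fun T _ => isClosed_biInter fun g _ =>
    hC.preimage (continuous_const_smul g)

theorem exists_le_card_visitTimes_iInter [CompactSpace Z] {A : ℕ → Set Z} (hA : Antitone A)
    (hcl : ∀ n, IsClosed (A n)) {F : Finset G} {k : ℕ}
    (h : ∀ n, ∃ z, k ≤ (visitTimes F (A n) z).card) :
    ∃ z, k ≤ (visitTimes F (⋂ n, A n) z).card := by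
  obtain ⟨z, hz⟩ := IsCompact.nonempty_iInter_of_sequence_nonempty_isCompact_isClosed
    (fun n => {z | k ≤ (visitTimes F (A n) z).card})
    (fun n z hz => le_trans hz (Finset.card_le_card
      (visitTimes_mono subset_rfl (hA n.le_succ)))) h
    (isClosed_setOf_le_card_visitTimes (hcl 0) F k).isCompact
    fun n => isClosed_setOf_le_card_visitTimes (hcl n) F k
  have hstage : ∀ g ∈ F, ∃ N, ∀ n, g • z ∈ A N → g • z ∈ A n := fun g _ => by
    by_cases hg : ∀ n, g • z ∈ A n
    · exact ⟨0, fun n _ => hg n⟩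
    · push Not at hg
      obtain ⟨N, hN⟩ := hg
      exact ⟨N, fun _ h => absurd h hN⟩
  choose! N hN using hstage
  refine ⟨z, (mem_iInter.1 hz (F.sup N)).trans (Finset.card_le_card fun g hg => ?_)⟩
  obtain ⟨hgF, hgA⟩ := mem_visitTimes.1 hg
  exact mem_visitTimes.2 ⟨hgF, mem_iInter.2 fun n => hN g hgF n (hA (Finset.le_sup hgF) hgA)⟩

end Topology

end Density

/-! ### Clopen sets of prescribed density -/

section Clopen

open scoped Pointwise

variable {G Z : Type*}

theorem card_visitTimes_biUnion_le [SMul G Z] {ι : Type*} (F : Finset G) (I : Finset ι)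
    (C : ι → Set Z) (z : Z) :
    (visitTimes F (⋃ i ∈ I, C i) z).card ≤ ∑ i ∈ I, (visitTimes F (C i) z).card := by
  classical
  refine (Finset.card_le_card fun g hg => ?_).trans Finset.card_biUnion_le
  obtain ⟨hgF, hgC⟩ := mem_visitTimes.1 hg
  obtain ⟨i, hi, hgi⟩ := mem_iUnion₂.1 hgC
  exact Finset.mem_biUnion.2 ⟨i, hi, mem_visitTimes.2 ⟨hgF, hgi⟩⟩

variable [Group G] [MulAction G Z] [TopologicalSpace Z]

theorem IsFolnerSeq.exists_isClopen_upperDensity_mem_Ioc_of_cover [Nonempty Z] {F : ℕ → Finset G}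
    (hF : IsFolnerSeq fun n => (F n : Set G)) {A E : Set Z} (hA : IsClopen A) (hE : IsClopen E)
    {α η : ℝ} (hαA : α < upperDensity G A) (hEα : upperDensity G E ≤ α) {ι : Type*}
    {t : Finset ι} {C : ι → Set Z} (hC : ∀ i ∈ t, IsClopen (C i)) (hCA : A ⊆ ⋃ i ∈ t, C i)
    (hCη : ∀ i ∈ t, upperDensity G (C i) ≤ η) :
    ∃ A', IsClopen A' ∧ A ∩ E ⊆ A' ∧ A' ⊆ A ∧ upperDensity G A' ∈ Ioc α (α + η) := by
  classical
  suffices key : ∀ s ⊆ t, α < upperDensity G (A ∩ (E ∪ ⋃ i ∈ s, C i)) → ∃ A', IsClopen A' ∧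
      A ∩ E ⊆ A' ∧ A' ⊆ A ∧ upperDensity G A' ∈ Ioc α (α + η) by
    refine key t subset_rfl ?_
    rwa [inter_eq_left.2 (hCA.trans subset_union_right)]
  intro s
  induction s using Finset.induction_on with
  | empty =>
    intro _ h
    refine absurd h (not_lt.2 ((upperDensity_mono ?_).trans hEα))
    simp
  | insert i s _ ih =>
    intro hst h
    by_cases hs : α < upperDensity G (A ∩ (E ∪ ⋃ i ∈ s, C i))
    · exact ih ((Finset.subset_insert i s).trans hst) hs
    refine ⟨A ∩ (E ∪ ⋃ j ∈ insert i s, C j), hA.inter (hE.union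
      (isClopen_biUnion_finset fun j hj => hC j (hst hj))),
      inter_subset_inter_right _ subset_union_left, inter_subset_left, h, ?_⟩
    have hsub : A ∩ (E ∪ ⋃ j ∈ insert i s, C j) ⊆ (A ∩ (E ∪ ⋃ i ∈ s, C i)) ∪ C i := by
      rintro z ⟨hzA, hzE | hz⟩
      · exact Or.inl ⟨hzA, Or.inl hzE⟩
      · rw [Finset.set_biUnion_insert] at hz
        exact hz.elim Or.inr fun hz => Or.inl ⟨hzA, Or.inr hz⟩
    linarith [upperDensity_mono (G := G) hsub, hF.upperDensity_union_le
      (A ∩ (E ∪ ⋃ i ∈ s, C i)) (C i), hCη i (hst (Finset.mem_insert_self i s))]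

variable [ContinuousConstSMul G Z] [IsCancelSMul G Z]

theorem infinite_of_isOpen [Infinite G] [CompactSpace Z] [MulAction.IsMinimal G Z] {U : Set Z}
    (hU : IsOpen U) (hne : U.Nonempty) : U.Infinite := by
  intro hfin
  obtain ⟨I, hI⟩ := isCompact_univ.exists_finite_cover_smul G hU hne
  have hZ : (univ : Set Z).Finite :=
    (I.finite_toSet.biUnion fun g _ => hfin.image (g • ·)).subset hI
  obtain ⟨z, -⟩ := hne
  exact (infinite_range_of_injective fun (g h : G) (hgh : g • z = h • z) =>
    IsCancelSMul.right_cancel g h z hgh) (hZ.subset (subset_univ _))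

variable [T2Space Z]

theorem exists_isOpen_mem_card_visitTimes_le_one (W : Finset G) (z : Z) :
    ∃ U : Set Z, IsOpen U ∧ z ∈ U ∧ ∀ w, (visitTimes W U w).card ≤ 1 := by
  obtain ⟨N, hN, hdisj⟩ := ((W.finite_toSet.image fun g => g⁻¹ • z)).t2_separation
  refine ⟨⋂ g ∈ W, (g⁻¹ • ·) ⁻¹' N (g⁻¹ • z), isOpen_biInter_finset fun g _ =>
    (hN _).2.preimage (continuous_const_smul _), mem_iInter₂.2 fun g _ => (hN _).1,
    fun w => Finset.card_le_one.2 fun a ha b hb => ?_⟩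
  have hmem {g : G} (hg : g ∈ visitTimes W (⋂ g ∈ W, (g⁻¹ • ·) ⁻¹' N (g⁻¹ • z)) w) :
      w ∈ N (g⁻¹ • z) := by
    obtain ⟨hgW, hgN⟩ := mem_visitTimes.1 hg
    simpa using mem_iInter₂.1 hgN g hgW
  have heq : a⁻¹ • z = b⁻¹ • z := hdisj.elim_set (mem_image_of_mem _ (visitTimes_subset ha))
    (mem_image_of_mem _ (visitTimes_subset hb)) w (hmem ha) (hmem hb)
  exact inv_injective (IsCancelSMul.right_cancel _ _ _ heq)

variable [CompactSpace Z] [TotallyDisconnectedSpace Z] [Nonempty Z] [Infinite G]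

theorem exists_isClopen_superset_upperDensity_le {T : Set Z} (hT : T.Finite) {η : ℝ}
    (hη : 0 < η) : ∃ E : Set Z, IsClopen E ∧ T ⊆ E ∧ upperDensity G E ≤ η := by
  lift T to Finset Z using hT
  obtain ⟨n, hn⟩ := exists_nat_gt (T.card / η)
  obtain ⟨W, hW⟩ := Infinite.exists_subset_card_eq G (n + 1)
  have hWne : W.Nonempty := Finset.card_pos.1 (hW.symm ▸ n.succ_pos)
  choose U hU hzU hvisit using exists_isOpen_mem_card_visitTimes_le_one (Z := Z) W
  choose C hC hzC hCU using fun z => compact_exists_isClopen_in_isOpen (hU z) (hzU z)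
  refine ⟨⋃ z ∈ T, C z, isClopen_biUnion_finset fun z _ => hC z,
    fun z hz => mem_biUnion hz (hzC z), upperDensity_le hWne fun w => ?_⟩
  have hcard : (visitTimes W (⋃ z ∈ T, C z) w).card ≤ T.card :=
    (card_visitTimes_biUnion_le W T C w).trans <| (Finset.sum_le_card_nsmul T _ 1 fun z _ =>
      (Finset.card_le_card (visitTimes_mono subset_rfl (hCU z))).trans (hvisit z w)).trans_eq
      (by rw [smul_eq_mul, mul_one])
  calc ((visitTimes W (⋃ z ∈ T, C z) w).card : ℝ) ≤ T.card := Nat.cast_le.2 hcard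
    _ ≤ η * n := ((div_lt_iff₀' hη).1 hn).le
    _ ≤ η * W.card := by
        rw [hW]
        gcongr
        lia

theorem IsFolnerSeq.exists_isClopen_upperDensity_mem_Ioc {F : ℕ → Finset G}
    (hF : IsFolnerSeq fun n => (F n : Set G)) {A T : Set Z} (hA : IsClopen A) (hT : T.Finite)
    (hTA : T ⊆ A) {α η : ℝ} (hα : 0 < α) (hη : 0 < η) (hαA : α < upperDensity G A) :
    ∃ A', IsClopen A' ∧ T ⊆ A' ∧ A' ⊆ A ∧ upperDensity G A' ∈ Ioc α (α + η) := by
  obtain ⟨E, hE, hTE, hEα⟩ := exists_isClopen_superset_upperDensity_le (G := G) hT hα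
  choose C hC hzC hCη using fun z : Z =>
    exists_isClopen_superset_upperDensity_le (G := G) (finite_singleton z) hη
  obtain ⟨t, ht⟩ := CompactSpace.elim_nhds_subcover C
    fun z => (hC z).isOpen.mem_nhds (hzC z rfl)
  obtain ⟨A', hA', hEA', hA'A, hdens⟩ := hF.exists_isClopen_upperDensity_mem_Ioc_of_cover
    hA hE hαA hEα (fun z _ => hC z) ((subset_univ A).trans ht.symm.subset)
    fun z (_ : z ∈ t) => hCη z
  exact ⟨A', hA', (subset_inter hTA hTE).trans hEA', hA'A, hdens⟩

theorem exists_isClopen_tower [MulAction.IsMinimal G Z] (F : Finset G) {U T : Set Z}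
    (hU : IsOpen U) (hne : U.Nonempty) (hT : T.Finite) {η : ℝ} (hη : 0 < η) :
    ∃ V ⊆ U, IsClopen V ∧ V.Nonempty ∧ (F : Set G).PairwiseDisjoint (· • V) ∧
      Disjoint (⋃ g ∈ F, g • V) T ∧ upperDensity G (⋃ g ∈ F, g • V) ≤ η := by
  classical
  obtain ⟨z, hzU, hzT⟩ := (infinite_of_isOpen (G := G) hU hne).exists_notMem_finite
    (F.finite_toSet.biUnion fun g _ => hT.preimage (MulAction.injective g).injOn)
  replace hzT : ∀ g ∈ F, g • z ∉ T := fun g hg h => hzT (mem_biUnion hg h)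
  obtain ⟨E, hE, hzE, hEη⟩ := exists_isClopen_superset_upperDensity_le (G := G)
    (F.finite_toSet.image (· • z)) hη
  obtain ⟨N, hN, hzN, hvisit⟩ := exists_isOpen_mem_card_visitTimes_le_one F⁻¹ z
  obtain ⟨V, hV, hzV, hVsub⟩ := compact_exists_isClopen_in_isOpen (x := z)
    ((hU.inter hN).inter (isOpen_biInter_finset (s := F) fun g _ =>
      (hE.isOpen.sdiff hT.isClosed).preimage (continuous_const_smul g)))
    ⟨⟨hzU, hzN⟩, mem_iInter₂.2 fun g hg => ⟨hzE (mem_image_of_mem _ hg), hzT g hg⟩⟩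
  have htower : ⋃ g ∈ F, g • V ⊆ E \ T := iUnion₂_subset fun g hg => by
    rintro _ ⟨v, hv, rfl⟩
    exact mem_iInter₂.1 (hVsub hv).2 g hg
  refine ⟨V, fun v hv => (hVsub hv).1.1, hV, ⟨z, hzV⟩, fun g hg h hh hgh => ?_,
    disjoint_left.2 fun w hw => (htower hw).2,
    (upperDensity_mono (htower.trans sdiff_subset)).trans hEη⟩
  refine disjoint_left.2 fun w hwg hwh => hgh (inv_injective ?_)
  have hmem {g : G} (hg : g ∈ F) (hw : w ∈ g • V) : g⁻¹ ∈ visitTimes F⁻¹ N w :=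
    mem_visitTimes.2 ⟨Finset.inv_mem_inv hg, (hVsub (mem_smul_set_iff_inv_smul_mem.1 hw)).1.2⟩
  exact Finset.card_le_one.1 (hvisit w) _ (hmem hg hwg) _ (hmem hh hwh)

end Clopen

/-! ### The generic sequence of stages -/

section Tower

open scoped Pointwise

variable {G Z K : Type*} [Group G] [MulAction G Z]

open scoped Classical in
/-- The labelling of `Z` obtained from `κ` by writing the pattern `x` along every orbit segment
`F • v` with `v ∈ V`. -/
noncomputable def towerCode (F : Finset G) (V : Set Z) (x : G → K) (κ : Z → K) (z : Z) : K :=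
  if h : ∃ g ∈ F, z ∈ g • V then x h.choose else κ z

variable {F : Finset G} {V : Set Z} {x : G → K} {κ : Z → K} {z : Z} {g : G}

theorem towerCode_of_mem (hV : (F : Set G).PairwiseDisjoint (· • V)) (hg : g ∈ F)
    (hz : z ∈ g • V) : towerCode F V x κ z = x g := by
  have h : ∃ g ∈ F, z ∈ g • V := ⟨g, hg, hz⟩
  rw [towerCode, dif_pos h, hV.elim_set h.choose_spec.1 hg z h.choose_spec.2 hz]

theorem towerCode_of_notMem (hz : z ∉ ⋃ g ∈ F, g • V) : towerCode F V x κ z = κ z :=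
  dif_neg fun ⟨_, hg, h⟩ => hz (mem_biUnion hg h)

variable [TopologicalSpace Z]

theorem isLocallyConstant_piecewise {s : Set Z} [∀ z, Decidable (z ∈ s)] {κ' : Z → K}
    (hs : IsClopen s) (hκ : IsLocallyConstant κ) (hκ' : IsLocallyConstant κ') :
    IsLocallyConstant (s.piecewise κ κ') := by
  refine (IsLocallyConstant.iff_eventually_eq _).2 fun z => ?_
  by_cases hz : z ∈ s
  · filter_upwards [hs.isOpen.mem_nhds hz, hκ.eventually_eq z] with w hw h
    rw [piecewise_eq_of_mem _ _ _ hw, piecewise_eq_of_mem _ _ _ hz, h]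
  · filter_upwards [hs.compl.isOpen.mem_nhds hz, hκ'.eventually_eq z] with w hw h
    rw [piecewise_eq_of_notMem _ _ _ hw, piecewise_eq_of_notMem _ _ _ hz, h]

theorem isLocallyConstant_towerCode [ContinuousConstSMul G Z] (hV : IsClopen V)
    (hdisj : (F : Set G).PairwiseDisjoint (· • V)) (hκ : IsLocallyConstant κ) :
    IsLocallyConstant (towerCode F V x κ) := by
  have hgV (g : G) : IsClopen (g • V) := ⟨hV.isClosed.smul g, hV.isOpen.smul g⟩
  refine (IsLocallyConstant.iff_eventually_eq _).2 fun z => ?_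
  by_cases hz : z ∈ ⋃ g ∈ F, g • V
  · obtain ⟨g, hg, hzg⟩ := mem_iUnion₂.1 hz
    filter_upwards [(hgV g).isOpen.mem_nhds hzg] with w hw
    rw [towerCode_of_mem hdisj hg hw, towerCode_of_mem hdisj hg hzg]
  · have hclosed : IsClosed (⋃ g ∈ F, g • V) := isClosed_biUnion_finset fun g _ => (hgV g).isClosed
    filter_upwards [hclosed.isOpen_compl.mem_nhds hz, hκ.eventually_eq z] with w hw h
    rw [towerCode_of_notMem hw, towerCode_of_notMem hz, h]

end Tower

/-- A finite stage of the construction of a subsystem of `Z × FullShift G K`: a point `(z, x)` has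
free coordinate `x g` when `g • z` is in `freeSet`, and `x g = code (g • z)` otherwise. Later stages
have fewer free coordinates, but the finite set `core` remains free forever. -/
structure Stage (G Z K : Type*) [Group G] [MulAction G Z] [TopologicalSpace Z] (α : ℝ) where
  freeSet : Set Z
  code : Z → K
  core : Set Z
  isClopen_freeSet : IsClopen freeSet
  isLocallyConstant_code : IsLocallyConstant code
  finite_core : core.Finite
  core_subset : core ⊆ freeSet
  lt_upperDensity : α < upperDensity G freeSet

namespace Stage

variable {G Z K : Type*} [Group G] [MulAction G Z] [TopologicalSpace Z] {α : ℝ}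

instance : Preorder (Stage G Z K α) where
  le σ τ := τ.freeSet ⊆ σ.freeSet ∧ σ.core ⊆ τ.core ∧ EqOn τ.code σ.code σ.freeSetᶜ
  le_refl _ := ⟨subset_rfl, subset_rfl, eqOn_refl _ _⟩
  le_trans _ _ _ h h' := ⟨h'.1.trans h.1, h.2.1.trans h'.2.1,
    (h'.2.2.mono (compl_subset_compl.2 h.1)).trans h.2.2⟩

variable {σ τ : Stage G Z K α}

theorem freeSet_antitone : Antitone (freeSet : Stage G Z K α → Set Z) := fun _ _ h => h.1

theorem core_monotone : Monotone (core : Stage G Z K α → Set Z) := fun _ _ h => h.2.1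

theorem code_eq_of_le (h : σ ≤ τ) {z : Z} (hz : z ∉ σ.freeSet) : τ.code z = σ.code z := h.2.2 hz

/-- The closed invariant set of all pairs compatible with a stage. -/
def fillings (σ : Stage G Z K α) : Set (Z × FullShift G K) :=
  {p | ∀ g : G, g • p.1 ∉ σ.freeSet → p.2 g = σ.code (g • p.1)}

theorem fillings_antitone : Antitone (fillings : Stage G Z K α → Set (Z × FullShift G K)) :=
  fun _ _ h _ hp g hg =>
    (hp g fun hg' => hg (freeSet_antitone h hg')).trans (code_eq_of_le h hg)

/-- Every subsystem of the fillings which projects onto a minimal `Z` either misses `O` or has all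
its orbits passing through `O`. -/
def Decides (σ : Stage G Z K α) (O : Set (Z × FullShift G K)) : Prop :=
  Disjoint σ.fillings O ∨
    ∃ V : Set Z, IsOpen V ∧ V.Nonempty ∧ ∀ p ∈ σ.fillings, p.1 ∈ V → p ∈ O

theorem exists_isOpen_forall_mem [ContinuousConstSMul G Z] [TopologicalSpace K]
    {p : Z × FullShift G K} {O : Set (Z × FullShift G K)} (hO : IsOpen O) (hpO : p ∈ O)
    (hp : p ∈ σ.fillings) :
    ∃ U : Set Z, IsOpen U ∧ p.1 ∈ U ∧ ∃ F : Finset G, ∀ w ∈ U, ∀ x : FullShift G K,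
      (∀ g ∈ F, g • w ∈ σ.freeSet → x g = p.2 g) →
      (∀ g ∈ F, g • w ∉ σ.freeSet → x g = σ.code (g • w)) → (w, x) ∈ O := by
  obtain ⟨u, v, hu, hv, hpu, hpv, huv⟩ := isOpen_prod_iff.1 hO p.1 p.2 hpO
  obtain ⟨F, c, hc, hcv⟩ := isOpen_pi_iff.1 hv p.2 hpv
  have hnear : ∀ g ∈ F, ∀ᶠ w in 𝓝 p.1, (g • p.1 ∈ σ.freeSet → g • w ∈ σ.freeSet) ∧
      (g • p.1 ∉ σ.freeSet → g • w ∉ σ.freeSet ∧ σ.code (g • w) = σ.code (g • p.1)) := by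
    intro g _
    have hg : ContinuousAt (fun w : Z => g • w) p.1 := (continuous_const_smul g).continuousAt
    by_cases h : g • p.1 ∈ σ.freeSet
    · filter_upwards [hg (σ.isClopen_freeSet.isOpen.mem_nhds h)] with w hw
      exact ⟨fun _ => hw, fun h' => absurd h h'⟩
    · filter_upwards [hg (σ.isClopen_freeSet.compl.isOpen.mem_nhds h),
        hg.eventually (σ.isLocallyConstant_code.eventually_eq (g • p.1))] with w hw hcode
      exact ⟨fun h' => absurd h' h, fun _ => ⟨hw, hcode⟩⟩
  have hnear_u : ∀ᶠ w in 𝓝 p.1, w ∈ u := hu.mem_nhds hpu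
  obtain ⟨U, hUsub, hU, hpU⟩ := eventually_nhds_iff.1
    (hnear_u.and ((eventually_all_finset F).2 hnear))
  refine ⟨U, hU, hpU, F, fun w hw x hfree hcode => huv ⟨(hUsub w hw).1, hcv fun g hg => ?_⟩⟩
  suffices x g = p.2 g by simpa only [this] using (hc g hg).2
  obtain ⟨hin, hout⟩ := (hUsub w hw).2 g hg
  by_cases h : g • p.1 ∈ σ.freeSet
  · exact hfree g hg (hin h)
  · rw [hcode g hg (hout h).1, (hout h).2, hp g h]

open scoped Pointwise

/-- In some window `F`, the core contains more than `α * #(W * F)` points of a single orbit. -/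
def Rich [DecidableEq G] (σ : Stage G Z K α) (W : Finset G) : Prop :=
  ∃ (F : Finset G) (z : Z), α * (W * F).card < (visitTimes F σ.core z).card

theorem exists_le_rich [DecidableEq G] [Nonempty Z] {F : ℕ → Finset G}
    (hF : IsFolnerSeq fun n => (F n : Set G)) (hα : 0 < α) (W : Finset G) (σ : Stage G Z K α) :
    ∃ τ, σ ≤ τ ∧ τ.Rich W := by
  have hδ : 0 < (upperDensity G σ.freeSet - α) / (2 * α) :=
    div_pos (sub_pos.2 σ.lt_upperDensity) (by positivity)
  obtain ⟨n, hn⟩ := (hF.eventually_card_mul_le W hδ).exists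
  obtain ⟨z, hz⟩ := exists_upperDensity_mul_card_le (G := G) σ.freeSet (F n)
  set P : Set Z := (· • z) '' (visitTimes (F n) σ.freeSet z : Set G)
  have hP : P.Finite := (Finset.finite_toSet _).image _
  have hPfree : P ⊆ σ.freeSet := image_subset_iff.2 fun g hg =>
    (mem_visitTimes.1 (Finset.mem_coe.1 hg)).2
  refine ⟨⟨σ.freeSet, σ.code, σ.core ∪ P, σ.isClopen_freeSet, σ.isLocallyConstant_code,
    σ.finite_core.union hP, union_subset σ.core_subset hPfree, σ.lt_upperDensity⟩,
    ⟨subset_rfl, subset_union_left, eqOn_refl _ _⟩, F n, z, ?_⟩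
  have hle : visitTimes (F n) σ.freeSet z ⊆ visitTimes (F n) (σ.core ∪ P) z := fun g hg =>
    mem_visitTimes.2 ⟨visitTimes_subset hg, Or.inr (mem_image_of_mem _ hg)⟩
  calc α * (W * F n).card
      ≤ α * ((1 + (upperDensity G σ.freeSet - α) / (2 * α)) * (F n).card) := by gcongr
    _ = (α + upperDensity G σ.freeSet) / 2 * (F n).card := by field_simp; ring
    _ < upperDensity G σ.freeSet * (F n).card := by
        have := hF.card_pos n
        have := σ.lt_upperDensity
        gcongr
        linarith
    _ ≤ (visitTimes (F n) σ.freeSet z).card := hz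
    _ ≤ _ := Nat.cast_le.2 (Finset.card_le_card hle)

variable [CompactSpace Z] [T2Space Z] [TotallyDisconnectedSpace Z] [Nonempty Z]
  [ContinuousConstSMul G Z] [IsCancelSMul G Z] [Infinite G]
  {F : ℕ → Finset G} (hF : IsFolnerSeq fun n => (F n : Set G))

include hF

theorem exists_le_forall_fillings_eq [MulAction.IsMinimal G Z] (E : Finset G) (x : G → K)
    {U : Set Z} (hU : IsOpen U) (hne : U.Nonempty) (σ : Stage G Z K α) :
    ∃ τ, σ ≤ τ ∧ ∃ V ⊆ U, IsOpen V ∧ V.Nonempty ∧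
      ∀ p ∈ τ.fillings, p.1 ∈ V → ∀ g ∈ E, g • p.1 ∈ σ.freeSet → p.2 g = x g := by
  classical
  have hgap : 0 < (upperDensity G σ.freeSet - α) / 2 := half_pos (sub_pos.2 σ.lt_upperDensity)
  obtain ⟨V, hVU, hV, hVne, hVdisj, hcore, hη⟩ :=
    exists_isClopen_tower E hU hne σ.finite_core hgap
  set R : Set Z := ⋃ g ∈ E, g • V
  have hR : IsClopen R :=
    isClopen_biUnion_finset fun g _ => ⟨hV.isClosed.smul g, hV.isOpen.smul g⟩
  have hdens : α < upperDensity G (σ.freeSet \ R) := by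
    have hunion := hF.upperDensity_union_le (σ.freeSet \ R) R
    have hmono := upperDensity_mono (G := G) (subset_sdiff_union σ.freeSet R)
    linarith [σ.lt_upperDensity]
  refine ⟨⟨σ.freeSet \ R, σ.freeSet.piecewise (towerCode E V x σ.code) σ.code, σ.core,
    σ.isClopen_freeSet.diff hR,
    isLocallyConstant_piecewise σ.isClopen_freeSet
      (isLocallyConstant_towerCode hV hVdisj σ.isLocallyConstant_code) σ.isLocallyConstant_code,
    σ.finite_core, subset_sdiff.2 ⟨σ.core_subset, hcore.symm⟩, hdens⟩,
    ⟨sdiff_subset, subset_rfl, fun z hz => piecewise_eq_of_notMem _ _ _ hz⟩,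
    V, hVU, hV.isOpen, hVne, fun p hp hpV g hg hfree => ?_⟩
  have hgV : g • p.1 ∈ g • V := smul_mem_smul_set hpV
  calc p.2 g = σ.freeSet.piecewise (towerCode E V x σ.code) σ.code (g • p.1) :=
        hp g fun h => h.2 (mem_biUnion hg hgV)
    _ = towerCode E V x σ.code (g • p.1) := piecewise_eq_of_mem _ _ _ hfree
    _ = x g := towerCode_of_mem hVdisj hg hgV

theorem exists_le_decides [MulAction.IsMinimal G Z] [TopologicalSpace K]
    {O : Set (Z × FullShift G K)} (hO : IsOpen O) (σ : Stage G Z K α) :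
    ∃ τ, σ ≤ τ ∧ τ.Decides O := by
  by_cases hdisj : Disjoint σ.fillings O
  · exact ⟨σ, le_rfl, Or.inl hdisj⟩
  obtain ⟨p, hp, hpO⟩ := not_disjoint_iff.1 hdisj
  obtain ⟨U, hU, hpU, E, hUE⟩ := exists_isOpen_forall_mem hO hpO hp
  obtain ⟨τ, hστ, V, hVU, hV, hVne, hτ⟩ := exists_le_forall_fillings_eq hF E p.2 hU ⟨_, hpU⟩ σ
  exact ⟨τ, hστ, Or.inr ⟨V, hV, hVne, fun q hq hqV =>
    hUE _ (hVU hqV) _ (hτ q hq hqV) fun g _ => fillings_antitone hστ hq g⟩⟩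

theorem exists_le_upperDensity_le (hα : 0 < α) {η : ℝ} (hη : 0 < η) (σ : Stage G Z K α) :
    ∃ τ, σ ≤ τ ∧ upperDensity G τ.freeSet ≤ α + η := by
  obtain ⟨A, hA, hcore, hAσ, hαA, hAη⟩ := hF.exists_isClopen_upperDensity_mem_Ioc
    σ.isClopen_freeSet σ.finite_core σ.core_subset hα hη σ.lt_upperDensity
  exact ⟨⟨A, σ.code, σ.core, hA, σ.isLocallyConstant_code, σ.finite_core, hcore, hαA⟩,
    ⟨hAσ, subset_rfl, eqOn_refl _ _⟩, hAη⟩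

theorem exists_monotone_generic [Countable G] [DecidableEq G] [MulAction.IsMinimal G Z]
    [TopologicalSpace K] [Nonempty K] (hα : α ∈ Ioo 0 1) {ι : Type*} [Countable ι]
    {O : ι → Set (Z × FullShift G K)} (hO : ∀ i, IsOpen (O i)) :
    ∃ σ : ℕ → Stage G Z K α, Monotone σ ∧
      (∀ η > 0, ∃ n, upperDensity G (σ n).freeSet ≤ α + η) ∧
      (∀ W, ∃ n, (σ n).Rich W) ∧ ∀ i, ∃ n, (σ n).Decides (O i) := by
  let σ₀ : Stage G Z K α := ⟨univ, fun _ => Classical.arbitrary K, ∅, isClopen_univ,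
    IsLocallyConstant.const _, finite_empty, empty_subset _,
    hα.2.trans_le one_le_upperDensity_univ⟩
  let 𝒟 : ℕ ⊕ Finset G ⊕ ι → Order.Cofinal (Stage G Z K α) := Sum.elim
    (fun m => ⟨{τ | upperDensity G τ.freeSet ≤ α + 1 / (m + 1)}, fun σ =>
      (exists_le_upperDensity_le hF hα.1 Nat.one_div_pos_of_nat σ).imp fun _ h => h.symm⟩)
    (Sum.elim
      (fun W => ⟨{τ | τ.Rich W}, fun σ => (exists_le_rich hF hα.1 W σ).imp fun _ h => h.symm⟩)
      (fun i => ⟨{τ | τ.Decides (O i)}, fun σ =>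
        (exists_le_decides hF (hO i) σ).imp fun _ h => h.symm⟩))
  have := Encodable.ofCountable (ℕ ⊕ Finset G ⊕ ι)
  have hmem := Order.sequenceOfCofinals.encode_mem σ₀ 𝒟
  refine ⟨Order.sequenceOfCofinals σ₀ 𝒟, Order.sequenceOfCofinals.monotone σ₀ 𝒟, fun η hη => ?_,
    fun W => ⟨_, hmem (.inr (.inl W))⟩, fun i => ⟨_, hmem (.inr (.inr i))⟩⟩
  obtain ⟨m, hm⟩ := exists_nat_one_div_lt hη
  exact ⟨_, (hmem (.inl m) : _ ≤ _).trans (by gcongr)⟩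

end Stage

/-! ### The limit system -/

section LimitSystem

open MulAction TopologicalSpace

variable {G Z K : Type*} [Group G] [MulAction G Z] [TopologicalSpace Z] {α : ℝ}

theorem Stage.smul_mem_fillings {σ : Stage G Z K α} (g : G) {p : Z × FullShift G K}
    (hp : p ∈ σ.fillings) : g • p ∈ σ.fillings := fun h hh => by
  have hhg : h • (g • p).1 = (h * g) • p.1 := smul_smul h g p.1
  rw [hhg] at hh ⊢
  exact hp _ hh

theorem Stage.isClosed_fillings [ContinuousConstSMul G Z] [TopologicalSpace K] [T2Space K]
    (σ : Stage G Z K α) : IsClosed σ.fillings := by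
  simp only [fillings, ofPred_forall, ← or_iff_not_imp_left]
  refine isClosed_iInter fun g => ?_
  have hg : Continuous fun p : Z × FullShift G K => g • p.1 :=
    (continuous_const_smul g).comp continuous_fst
  exact (σ.isClopen_freeSet.isClosed.preimage hg).union
    (isClosed_eq ((FullShift.continuous_eval g).comp continuous_snd)
      (σ.isLocallyConstant_code.continuous.comp hg))

/-- The system of all pairs compatible with every stage. -/
def limitSystem (σ : ℕ → Stage G Z K α) : SubMulAction G (Z × FullShift G K) where
  carrier := ⋂ n, (σ n).fillings
  smul_mem' g _ hp := mem_iInter.2 fun n => Stage.smul_mem_fillings g (mem_iInter.1 hp n)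

/-- The set of points of `Z` at which no stage prescribes the symbol. -/
def limitFreeSet (σ : ℕ → Stage G Z K α) : Set Z := ⋂ n, (σ n).freeSet

variable {σ : ℕ → Stage G Z K α}

theorem exists_limitCode [Nonempty K] (hσ : Monotone σ) :
    ∃ κ : Z → K, ∀ z n, z ∉ (σ n).freeSet → κ z = (σ n).code z := by
  have hz : ∀ z, ∃ k, ∀ n, z ∉ (σ n).freeSet → k = (σ n).code z := fun z => by
    by_cases h : ∃ m, z ∉ (σ m).freeSet
    · obtain ⟨m, hm⟩ := h
      exact ⟨(σ m).code z, fun n hn => (le_total m n).elim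
        (fun hmn => (Stage.code_eq_of_le (hσ hmn) hm).symm)
        fun hnm => Stage.code_eq_of_le (hσ hnm) hn⟩
    · exact ⟨Classical.arbitrary K, fun n hn => absurd ⟨n, hn⟩ h⟩
  exact Classical.skolem.1 hz

theorem exists_continuous_fibre [TopologicalSpace K] [Nonempty K] (hσ : Monotone σ) (z : Z) :
    ∃ ψ : FullShift G K → limitSystem σ, Continuous ψ ∧
      ∀ y g, g • z ∈ limitFreeSet σ → (ψ y).1.2 g = y g := by
  classical
  obtain ⟨κ, hκ⟩ := exists_limitCode hσ
  let x (y : FullShift G K) : FullShift G K := fun g =>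
    if g • z ∈ limitFreeSet σ then y g else κ (g • z)
  have hx : ∀ y, (z, x y) ∈ limitSystem σ := fun y => mem_iInter.2 fun n g hg =>
    (if_neg fun h => hg (mem_iInter.1 h n)).trans (hκ _ n hg)
  refine ⟨fun y => ⟨(z, x y), hx y⟩,
    (continuous_const.prodMk (continuous_pi fun g => ?_)).subtype_mk _, fun y g hg => if_pos hg⟩
  by_cases hg : g • z ∈ limitFreeSet σ
  · simpa only [x, if_pos hg] using FullShift.continuous_eval g
  · simpa only [x, if_neg hg] using continuous_const

theorem nonempty_limitSystem [Nonempty Z] [TopologicalSpace K] [Nonempty K] (hσ : Monotone σ) :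
    Nonempty (limitSystem σ) :=
  let ⟨ψ, _⟩ := exists_continuous_fibre hσ (Classical.arbitrary Z)
  ⟨ψ fun _ => Classical.arbitrary K⟩

theorem isMinimal_limitSystem [MulAction.IsMinimal G Z] [TopologicalSpace K]
    {B : Set (Set (Z × FullShift G K))} (hB : IsTopologicalBasis B)
    (hdec : ∀ O : B, ∃ n, (σ n).Decides O) : MulAction.IsMinimal G (limitSystem σ) where
  dense_orbit p := dense_iff_inter_open.2 fun U hU ⟨q, hq⟩ => by
    obtain ⟨U', hU', rfl⟩ := isOpen_induced_iff.1 hU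
    obtain ⟨O, hO, hqO, hOU⟩ := hB.exists_subset_of_mem_open hq hU'
    obtain ⟨n, hn⟩ := hdec ⟨O, hO⟩
    obtain hdisj | ⟨V, hV, hVne, hVO⟩ := hn
    · exact absurd hqO (hdisj.notMem_of_mem_left (mem_iInter.1 q.2 n))
    obtain ⟨g, hg⟩ := hV.exists_smul_mem G p.1.1 hVne
    exact ⟨g • p, hOU (hVO _ (mem_iInter.1 (g • p).2 n) hg), mem_orbit p g⟩

instance [CompactSpace Z] [ContinuousConstSMul G Z] [TopologicalSpace K] [CompactSpace K]
    [T2Space K] : CompactSpace (limitSystem σ) :=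
  isCompact_iff_compactSpace.1 (isClosed_iInter fun n => (σ n).isClosed_fillings).isCompact

noncomputable instance [Countable G] [CompactSpace Z] [T2Space Z] [SecondCountableTopology Z]
    [TopologicalSpace K] [CompactSpace K] [T2Space K] [SecondCountableTopology K] :
    MetricSpace (limitSystem σ) :=
  have : MetrizableSpace (limitSystem σ) := IsEmbedding.subtypeVal.metrizableSpace
  metrizableSpaceMetric _

end LimitSystem

section LowerBound

variable {G Z : Type*} [Group G] [MulAction G Z] [TopologicalSpace Z] [CompactSpace Z]
  [ContinuousConstSMul G Z] {α : ℝ}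

theorem exists_mul_card_le_card_visitTimes_limitFreeSet [Nonempty Z] {K : Type*}
    {σ : ℕ → Stage G Z K α} (hσ : Monotone σ) (F : Finset G) :
    ∃ z, α * F.card ≤ (visitTimes F (limitFreeSet σ) z).card := by
  obtain ⟨z, hz⟩ := exists_le_card_visitTimes_iInter (F := F) (k := ⌈α * F.card⌉₊)
    (Stage.freeSet_antitone.comp_monotone hσ) (fun n => (σ n).isClopen_freeSet.isClosed) fun n => by
      obtain ⟨z, hz⟩ := exists_upperDensity_mul_card_le (G := G) (σ n).freeSet F
      refine ⟨z, Nat.ceil_le.2 (le_trans ?_ hz)⟩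
      gcongr
      exact (σ n).lt_upperDensity.le
  exact ⟨z, Nat.ceil_le.1 hz⟩

variable [Countable G] [T2Space Z] [SecondCountableTopology Z] {d : ℕ}
  {σ : ℕ → Stage G Z (Fin d → TripodSet) α}

theorem exists_continuous_cube (hσ : Monotone σ) :
    ∃ ε > 0, ∀ (z : Z) (S : Finset G), (∀ g ∈ S, g • z ∈ limitFreeSet σ) →
      ∃ ψ : (S × Fin d → TripodSet) → limitSystem σ, Continuous ψ ∧
        ∀ y y', (∃ j, 1 / 2 ≤ dist (y j) (y' j)) →
          ∃ g ∈ S, ε ≤ dist (g • ψ y) (g • ψ y') := by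
  classical
  have hone : Continuous fun x : limitSystem σ => x.1.2 1 :=
    (FullShift.continuous_eval 1).comp (continuous_snd.comp continuous_subtype_val)
  obtain ⟨ε, hε, hunif⟩ := Metric.uniformContinuous_iff.1
    (CompactSpace.uniformContinuous_of_continuous hone) (1 / 2) one_half_pos
  refine ⟨ε, hε, fun z S hS => ?_⟩
  obtain ⟨ψ, hψ, hψS⟩ := exists_continuous_fibre hσ z
  let extend (y : S × Fin d → TripodSet) : FullShift G (Fin d → TripodSet) := fun g i =>
    if hg : g ∈ S then y (⟨g, hg⟩, i) else Classical.arbitrary TripodSet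
  have hextend : Continuous extend := by
    refine continuous_pi fun g => continuous_pi fun i => ?_
    by_cases hg : g ∈ S
    · simpa only [extend, dif_pos hg] using continuous_apply _
    · simpa only [extend, dif_neg hg] using continuous_const
  refine ⟨ψ ∘ extend, hψ.comp hextend, fun y y' ⟨⟨g, i⟩, hj⟩ => ⟨g, g.2, ?_⟩⟩
  have hsymbol (y : S × Fin d → TripodSet) : (g.1 • ψ (extend y)).1.2 1 i = y (g, i) :=
    calc (ψ (extend y)).1.2 (1 * g) i = extend y g i := by rw [one_mul, hψS _ _ (hS g g.2)]
      _ = y (g, i) := dif_pos g.2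
  by_contra! hlt
  refine absurd (hunif hlt) (not_lt.2 (hj.trans ?_))
  rw [← hsymbol y, ← hsymbol y']
  exact dist_le_pi_dist _ _ i

theorem exists_card_visitTimes_limitFreeSet_mul_le_widim (hσ : Monotone σ) :
    ∃ ε > 0, ∀ (z : Z) (F : Finset G), (((visitTimes F (limitFreeSet σ) z).card * d : ℕ) : ℕ∞) ≤
      widim (limitSystem σ) (dynDist (fun (g : G) x => g • x) F) ε := by
  obtain ⟨ε, hε, hcube⟩ := exists_continuous_cube hσ
  refine ⟨ε, hε, fun z F => le_widim fun n hn => ?_⟩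
  obtain ⟨ψ, hψ, hψε⟩ := hcube z _ fun g hg => (mem_visitTimes.1 hg).2
  simpa using hn.card_le_of_tripod hψ fun y y' hyy' =>
    let ⟨_, hg, hge⟩ := hψε y y' hyy'
    hge.trans (dist_le_dynDist (visitTimes_subset hg) _ _)

theorem ofReal_mul_le_mdimAlong_limitSystem [Nonempty Z] (hσ : Monotone σ) {F : ℕ → Finset G}
    (hF : ∀ n, (F n).Nonempty) :
    ENNReal.ofReal (α * d) ≤
      mdimAlong (fun (g : G) (x : limitSystem σ) => g • x) fun n => (F n : Set G) := by
  obtain ⟨ε, hε, hwidim⟩ := exists_card_visitTimes_limitFreeSet_mul_le_widim hσ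
  refine ofReal_le_mdimAlong hε hF fun n => ?_
  obtain ⟨z, hz⟩ := exists_mul_card_le_card_visitTimes_limitFreeSet hσ (F n)
  refine ⟨_, ?_, hwidim z (F n)⟩
  push_cast
  rw [mul_right_comm]
  gcongr

end LowerBound

section NonEmbedding

open scoped Pointwise

variable {G Z : Type*} [Group G] [DecidableEq G] [MulAction G Z] [TopologicalSpace Z] {α : ℝ}

theorem Stage.Rich.exists_mul_card_lt_card_visitTimes_limitFreeSet {K : Type*}
    {σ : ℕ → Stage G Z K α} (hσ : Monotone σ) {n : ℕ} {W : Finset G} (h : (σ n).Rich W) :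
    ∃ (F : Finset G) (z : Z), α * (W * F).card < (visitTimes F (limitFreeSet σ) z).card := by
  obtain ⟨F, z, hz⟩ := h
  have hcore : (σ n).core ⊆ limitFreeSet σ := subset_iInter fun k =>
    (Stage.core_monotone (hσ (le_max_left n k))).trans ((σ _).core_subset.trans
      (Stage.freeSet_antitone (hσ (le_max_right n k))))
  exact ⟨F, z, hz.trans_le (Nat.cast_le.2 (Finset.card_le_card (visitTimes_mono subset_rfl hcore)))⟩

variable [Countable G] [CompactSpace Z] [T2Space Z] [SecondCountableTopology Z]
  [ContinuousConstSMul G Z] {d m : ℕ} {σ : ℕ → Stage G Z (Fin d → TripodSet) α}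

theorem not_exists_embedding_limitSystem_shift_cube (hσ : Monotone σ) (hd : 0 < d)
    (hm : (m : ℝ) ≤ 2 * α * d) (hrich : ∀ W, ∃ n, (σ n).Rich W) :
    ¬∃ f : limitSystem σ → G → Fin m → Icc (0 : ℝ) 1,
      Continuous f ∧ Function.Injective f ∧ ∀ (g : G) x, f (g • x) = shift g (f x) := by
  rintro ⟨f, hf, hinj, hequi⟩
  obtain ⟨ε, hε, hcube⟩ := exists_continuous_cube hσ
  have hcoord : ∀ h, Continuous fun x => f x h := fun h => (continuous_apply h).comp hf
  obtain ⟨W, hW⟩ := exists_finset_forall_notMem_imp_dist_lt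
    (U := fun h : G => {q | f q.1 h ≠ f q.2 h})
    (fun h => isOpen_ne_fun ((hcoord h).comp continuous_fst) ((hcoord h).comp continuous_snd))
    (fun x x' hne => Function.ne_iff.1 (hinj.ne hne)) hε
  obtain ⟨n, hn⟩ := hrich W
  obtain ⟨F, z, hz⟩ := hn.exists_mul_card_lt_card_visitTimes_limitFreeSet hσ
  set S := visitTimes F (limitFreeSet σ) z
  obtain ⟨ψ, hψ, hψε⟩ := hcube z S fun g hg => (mem_visitTimes.1 hg).2
  have hlt : (W * F).card * m < 2 * (S.card * d) := by
    have hd' : (0 : ℝ) < d := Nat.cast_pos.2 hd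
    rify
    calc ((W * F).card : ℝ) * m ≤ (W * F).card * (2 * α * d) := by gcongr
      _ = 2 * (α * (W * F).card * d) := by ring
      _ < 2 * (S.card * d) := by gcongr
  obtain ⟨y, y', hyy', hj⟩ := exists_eq_half_le_dist_tripod (J := S × Fin d)
    (F := (W * F : Finset G) × Fin m → ℝ) (by simpa using hlt)
    (Φ := fun y q => f (ψ y) q.1 q.2)
    (continuous_pi fun q => continuous_subtype_val.comp
      ((continuous_apply q.2).comp ((hcoord q.1).comp hψ)))
  obtain ⟨g, hg, hge⟩ := hψε y y' hj
  refine absurd (hW _ _ fun h hh => not_not.2 ?_) (not_lt.2 hge)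
  rw [hequi, hequi]
  exact funext fun i => Subtype.ext
    (congrFun hyy' (⟨h * g, Finset.mul_mem_mul hh (visitTimes_subset hg)⟩, i))

end NonEmbedding

section LocallyConstant

variable {X : Type*} [TopologicalSpace X]

theorem isLocallyConstant_mem {s : Set X} (hs : IsClopen s) : IsLocallyConstant (· ∈ s) :=
  (IsLocallyConstant.iff_eventually_eq _).2 fun x => by
    by_cases hx : x ∈ s
    · filter_upwards [hs.isOpen.mem_nhds hx] with y hy using eq_iff_iff.2 (iff_of_true hy hx)
    · filter_upwards [hs.compl.isOpen.mem_nhds hx] with y hy using eq_iff_iff.2 (iff_of_false hy hx)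

theorem isLocallyConstant_pi {ι : Type*} [Finite ι] {Y : ι → Type*} {f : X → ∀ i, Y i}
    (hf : ∀ i, IsLocallyConstant fun x => f x i) : IsLocallyConstant f :=
  (IsLocallyConstant.iff_eventually_eq _).2 fun x => by
    filter_upwards [eventually_all.2 fun i => (hf i).eventually_eq x] with y hy using funext hy

end LocallyConstant

section UpperBound

open TopologicalSpace
open scoped Pointwise

namespace Stage

section Itinerary

variable {G Z K : Type*} [Group G] [MulAction G Z] [TopologicalSpace Z] {α : ℝ}

/-- What `σ` and the clopen sets in `𝓑` see along the partial orbit `F • z`. -/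
def itinerary (σ : Stage G Z K α) (𝓑 : Finset (Clopens Z)) (F : Finset G) (z : Z) :
    F → (𝓑 → Prop) × Prop × K :=
  fun g => (fun B => g.1 • z ∈ B.1, g.1 • z ∈ σ.freeSet, σ.code (g.1 • z))

theorem isLocallyConstant_itinerary [ContinuousConstSMul G Z] (σ : Stage G Z K α)
    (𝓑 : Finset (Clopens Z)) (F : Finset G) : IsLocallyConstant (σ.itinerary 𝓑 F) :=
  isLocallyConstant_pi fun g =>
    ((isLocallyConstant_pi fun B => isLocallyConstant_mem B.1.isClopen).prodMk
      ((isLocallyConstant_mem σ.isClopen_freeSet).prodMk σ.isLocallyConstant_code)).comp_continuous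
      (continuous_const_smul g.1)

end Itinerary

variable {G Z : Type*} [Group G] [MulAction G Z] [TopologicalSpace Z] {α : ℝ} {d : ℕ}

/-- The coordinates of the symbols at the sites of `F` left free by `σ`, set to `0` at the sites
where `σ` prescribes the symbol. -/
noncomputable def freeCoords (σ : Stage G Z (Fin d → TripodSet) α) (F : Finset G)
    (p : Z × FullShift G (Fin d → TripodSet)) (q : F × Fin d × Fin 3) : ℝ :=
  indicator {p | q.1.1 • p.1 ∈ σ.freeSet} (fun p => (p.2 q.1 q.2.1).1 q.2.2) p

variable (σ : Stage G Z (Fin d → TripodSet) α) (F : Finset G)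

theorem continuous_freeCoords [ContinuousConstSMul G Z] : Continuous (σ.freeCoords F) := by
  refine continuous_pi fun q => IsClopen.continuous_indicator
    (σ.isClopen_freeSet.preimage ((continuous_const_smul q.1.1).comp continuous_fst)) ?_
  exact (continuous_apply q.2.2).comp (continuous_subtype_val.comp
    ((continuous_apply q.2.1).comp ((FullShift.continuous_eval q.1.1).comp continuous_snd)))

theorem freeCoords_mem_Icc (p : Z × FullShift G (Fin d → TripodSet)) (q : F × Fin d × Fin 3) :
    σ.freeCoords F p q ∈ Icc 0 1 := by
  unfold freeCoords indicator
  split_ifs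
  · exact (p.2 q.1 q.2.1).2.1 q.2.2
  · exact unitInterval.zero_mem

theorem exists_finset_freeCoords_eq_zero (p : Z × FullShift G (Fin d → TripodSet)) :
    ∃ T : Finset (F × Fin d × Fin 3), T.card ≤ (visitTimes F σ.freeSet p.1).card * d ∧
      ∀ q ∉ T, σ.freeCoords F p q = 0 := by
  classical
  have hleg (t : TripodSet) : ∃ j, ∀ j' ≠ j, t.1 j' = 0 := by
    by_cases h : ∃ j, t.1 j ≠ 0
    · obtain ⟨j, hj⟩ := h
      exact ⟨j, fun j' hj' => (t.2.2 j' j hj').resolve_right hj⟩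
    · exact ⟨0, fun j' _ => not_not.1 fun hj' => h ⟨j', hj'⟩⟩
  choose leg hleg using hleg
  refine ⟨((visitTimes F σ.freeSet p.1).subtype (· ∈ F) ×ˢ Finset.univ).image
    fun q => (q.1, q.2, leg (p.2 q.1 q.2)), Finset.card_image_le.trans ?_, fun ⟨g, i, j⟩ hq => ?_⟩
  · rw [Finset.card_product, Finset.card_subtype, Finset.card_fin]
    exact Nat.mul_le_mul_right _ (Finset.card_filter_le _ _)
  · refine indicator_apply_eq_zero.2 fun hg => hleg _ _ fun hj : j = leg (p.2 g i) => ?_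
    subst hj
    refine hq (Finset.mem_image.2 ⟨(g, i), ?_, rfl⟩)
    exact Finset.mk_mem_product (Finset.mem_subtype.2 (mem_visitTimes.2 ⟨g.2, hg⟩))
      (Finset.mem_univ i)

variable {σ F}

theorem freeCoords_of_mem {p : Z × FullShift G (Fin d → TripodSet)} {g : G} (hg : g ∈ F)
    (h : g • p.1 ∈ σ.freeSet) (i : Fin d) (j : Fin 3) :
    σ.freeCoords F p (⟨g, hg⟩, i, j) = (p.2 g i).1 j :=
  if_pos h

theorem apply_eq_of_itinerary_eq {𝓑 : Finset (Clopens Z)}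
    {p p' : Z × FullShift G (Fin d → TripodSet)} (hp : p ∈ σ.fillings) (hp' : p' ∈ σ.fillings)
    (hit : σ.itinerary 𝓑 F p.1 = σ.itinerary 𝓑 F p'.1)
    (hcoords : σ.freeCoords F p = σ.freeCoords F p') {g : G} (hg : g ∈ F) : p.2 g = p'.2 g := by
  have hsite := congrFun hit ⟨g, hg⟩
  have hfree : g • p.1 ∈ σ.freeSet ↔ g • p'.1 ∈ σ.freeSet :=
    iff_of_eq (congrArg (fun s => s.2.1) hsite)
  by_cases h : g • p.1 ∈ σ.freeSet
  · refine funext fun i => Subtype.ext (funext fun j => ?_)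
    calc (p.2 g i).1 j = σ.freeCoords F p (⟨g, hg⟩, i, j) := (freeCoords_of_mem hg h i j).symm
      _ = σ.freeCoords F p' (⟨g, hg⟩, i, j) := by rw [hcoords]
      _ = (p'.2 g i).1 j := freeCoords_of_mem hg (hfree.1 h) i j
  · calc p.2 g = σ.code (g • p.1) := hp g h
      _ = σ.code (g • p'.1) := congrArg (fun s => s.2.2) hsite
      _ = p'.2 g := (hp' g (mt hfree.2 h)).symm

end Stage

variable {G Z : Type*} [Group G] [Countable G] [MulAction G Z] [TopologicalSpace Z]
  [CompactSpace Z] [T2Space Z] [TotallyDisconnectedSpace Z] [SecondCountableTopology Z]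
  [ContinuousConstSMul G Z] {α : ℝ}

theorem exists_window_dist_lt {K : Type*} [TopologicalSpace K] [CompactSpace K] [T2Space K]
    [SecondCountableTopology K] (σ : ℕ → Stage G Z K α) {ε : ℝ} (hε : 0 < ε) :
    ∃ (𝓑 : Finset (Clopens Z)) (W : Finset G), 1 ∈ W ∧ ∀ x x' : limitSystem σ,
      (∀ B ∈ 𝓑, x.1.1 ∈ B ↔ x'.1.1 ∈ B) → (∀ h ∈ W, x.1.2 h = x'.1.2 h) → dist x x' < ε := by
  classical
  let U : Clopens Z ⊕ G → Set (limitSystem σ × limitSystem σ) := Sum.elim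
    (fun B => {q | q.1.1.1 ∈ B ∧ q.2.1.1 ∉ B}) fun h => {q | q.1.1.2 h ≠ q.2.1.2 h}
  have hbase : Continuous fun x : limitSystem σ => x.1.1 :=
    continuous_fst.comp continuous_subtype_val
  have hsymbol (h : G) : Continuous fun x : limitSystem σ => x.1.2 h :=
    (FullShift.continuous_eval h).comp (continuous_snd.comp continuous_subtype_val)
  have hU : ∀ i, IsOpen (U i) := Sum.rec
    (fun B => (B.isClopen.isOpen.preimage (hbase.comp continuous_fst)).inter
      (B.isClopen.compl.isOpen.preimage (hbase.comp continuous_snd)))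
    fun h => isOpen_ne_fun ((hsymbol h).comp continuous_fst) ((hsymbol h).comp continuous_snd)
  have hsep : ∀ x x', x ≠ x' → ∃ i, (x, x') ∈ U i := fun x x' hne => by
    by_cases hz : x.1.1 = x'.1.1
    · obtain ⟨h, hh⟩ := Function.ne_iff.1 fun hx => hne (Subtype.ext (Prod.ext hz hx))
      exact ⟨.inr h, hh⟩
    · obtain ⟨B, hB, hxB, hB'⟩ := compact_exists_isClopen_in_isOpen
        (isOpen_compl_singleton (x := x'.1.1)) hz
      exact ⟨.inl ⟨B, hB⟩, hxB, fun h => hB' h rfl⟩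
  obtain ⟨t, ht⟩ := exists_finset_forall_notMem_imp_dist_lt hU hsep hε
  refine ⟨t.toLeft, insert 1 t.toRight, Finset.mem_insert_self _ _, fun x x' h𝓑 hW => ht x x' ?_⟩
  rintro (B | h) hi hmem
  · exact hmem.2 ((h𝓑 B (Finset.mem_toLeft.2 hi)).1 hmem.1)
  · exact hmem (hW h (Finset.mem_insert_of_mem (Finset.mem_toRight.2 hi)))

variable {d : ℕ}

theorem exists_widimLE_limitSystem [DecidableEq G]
    (σ : ℕ → Stage G Z (Fin d → TripodSet) α) {ε : ℝ} (hε : 0 < ε) :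
    ∃ W : Finset G, 1 ∈ W ∧ ∀ (k m : ℕ) (F : Finset G),
      (∀ z, (visitTimes (W * F) (σ k).freeSet z).card ≤ m) →
        WidimLE (limitSystem σ) (dynDist (fun (g : G) x => g • x) F) ε (m * d) := by
  obtain ⟨𝓑, W, hW, hdist⟩ := exists_window_dist_lt σ hε
  refine ⟨W, hW, fun k m F hm => ?_⟩
  let it (x : limitSystem σ) := (σ k).itinerary 𝓑 (W * F) x.1.1
  have hit : IsLocallyConstant it := ((σ k).isLocallyConstant_itinerary 𝓑 (W * F)).comp_continuous
      (continuous_fst.comp continuous_subtype_val)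
  have := hit.range_finite.to_subtype
  refine WidimLE.of_label_coord (p := rangeFactorization it) ?_
    (((σ k).continuous_freeCoords (W * F)).comp continuous_subtype_val)
    (fun x => (σ k).freeCoords_mem_Icc _ x.1) (fun x => ?_) fun x x' hp hy => ?_
  · exact hit.desc _ _ Subtype.val_injective
  · obtain ⟨T, hT, hzero⟩ := (σ k).exists_finset_freeCoords_eq_zero (W * F) x.1
    exact ⟨T, hT.trans (Nat.mul_le_mul_right _ (hm _)), hzero⟩
  have hitx : it x = it x' := congrArg Subtype.val hp
  refine dynDist_lt hε fun g hg => hdist _ _ (fun B hB => ?_) fun h hh => ?_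
  · have hgWF : g ∈ W * F := by simpa using Finset.mul_mem_mul hW hg
    exact iff_of_eq (congrFun (congrArg Prod.fst (congrFun hitx ⟨g, hgWF⟩)) ⟨B, hB⟩)
  · exact Stage.apply_eq_of_itinerary_eq (mem_iInter.1 x.2 k) (mem_iInter.1 x'.2 k) hitx hy
      (Finset.mul_mem_mul hh hg)

theorem mdimAlong_limitSystem_le_ofReal_mul {σ : ℕ → Stage G Z (Fin d → TripodSet) α}
    (hdens : ∀ η > 0, ∃ n, upperDensity G (σ n).freeSet ≤ α + η) {F : ℕ → Finset G}
    (hF : IsFolnerSeq fun n => (F n : Set G)) :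
    mdimAlong (fun (g : G) (x : limitSystem σ) => g • x) (fun n => (F n : Set G)) ≤
      ENNReal.ofReal (α * d) := by
  classical
  refine mdimAlong_le_ofReal fun ε hε δ hδ => ?_
  obtain ⟨W, hW, hwidim⟩ := exists_widimLE_limitSystem σ hε
  obtain ⟨η, hη, hηδ⟩ : ∃ η > 0, η * d ≤ δ :=
    ⟨δ / (d + 1), by positivity, by rw [div_mul_eq_mul_div, div_le_iff₀ (by positivity)]; linarith⟩
  obtain ⟨k, hk⟩ := hdens (η / 2) (half_pos hη)
  have hlt : upperDensity G (σ k).freeSet < α + η := by linarith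
  have hnonneg : 0 ≤ α + η := (upperDensity_nonneg _).trans hlt.le
  filter_upwards [hF.eventually_card_visitTimes_mul_le hW hlt] with n hn
  refine ⟨⌊(α + η) * (F n).card⌋₊ * d, ?_, hwidim k _ (F n) fun z => Nat.le_floor (hn z)⟩
  calc ((⌊(α + η) * (F n).card⌋₊ * d : ℕ) : ℝ) ≤ (α + η) * (F n).card * d := by
        push_cast
        gcongr
        exact Nat.floor_le (by positivity)
    _ = (α * d + η * d) * (F n).card := by ring
    _ ≤ (α * d + δ) * (F n).card := by gcongr

end UpperBound

section MeanDimension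

variable {G Z : Type*} [Group G] [Countable G] [MulAction G Z] [TopologicalSpace Z]
  [CompactSpace Z] [T2Space Z] [TotallyDisconnectedSpace Z] [SecondCountableTopology Z]
  [Nonempty Z] [ContinuousConstSMul G Z] {α : ℝ} {d : ℕ}
  {σ : ℕ → Stage G Z (Fin d → TripodSet) α}

theorem mdimAlong_limitSystem (hσ : Monotone σ)
    (hdens : ∀ η > 0, ∃ n, upperDensity G (σ n).freeSet ≤ α + η) {F : ℕ → Set G}
    (hF : IsFolnerSeq F) :
    mdimAlong (fun (g : G) (x : limitSystem σ) => g • x) F = ENNReal.ofReal (α * d) := by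
  obtain ⟨F, rfl⟩ := hF.exists_finset
  exact le_antisymm (mdimAlong_limitSystem_le_ofReal_mul hdens hF)
    (ofReal_mul_le_mdimAlong_limitSystem hσ hF.nonempty)

end MeanDimension

/-- **Theorem (main).** For every infinite countable discrete amenable group `G` and every
positive integer `d`, there is a compact metric space `X` with a continuous minimal `G`-action
of mean dimension `d/2` which cannot be embedded in the full `G`-shift on `([0,1]^d)^G`. -/
theorem exists_minimal_action_mdim_half_d_nonembeddable (G : Type) [Group G] [Countable G]
    [Infinite G] (hG : AmenableGroup G) (d : ℕ) (hd : 0 < d) :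
    ∃ (X : Type) (_ : MetricSpace X) (φ : G → X → X),
      CompactSpace X ∧ Nonempty X ∧
      (∀ g : G, Continuous (φ g)) ∧
      (∀ x : X, φ 1 x = x) ∧
      (∀ g h : G, ∀ x : X, φ (g * h) x = φ g (φ h x)) ∧
      (∀ x : X, Dense (Set.range fun g : G => φ g x)) ∧
      (∀ F : ℕ → Set G, IsFolnerSeq F → mdimAlong φ F = (d : ℝ≥0∞) / 2) ∧
      ¬ ∃ f : X → (G → Fin d → Set.Icc (0 : ℝ) 1),
          Continuous f ∧ Function.Injective f ∧
            ∀ (g : G) (x : X), f (φ g x) = shift g (f x) := by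
  classical
  obtain ⟨F, hF⟩ := hG
  obtain ⟨F, rfl⟩ := hF.exists_finset
  obtain ⟨Z, hZ, _, _, _⟩ := exists_isMinimal_isCancelSMul G
  have : CompactSpace Z := isCompact_iff_compactSpace.1 hZ.isCompact
  have : SecondCountableTopology Z := TopologicalSpace.Subtype.secondCountableTopology _
  let B := TopologicalSpace.countableBasis (Z × FullShift G (Fin d → TripodSet))
  have hB := TopologicalSpace.isBasis_countableBasis (Z × FullShift G (Fin d → TripodSet))
  have : Countable B := (TopologicalSpace.countable_countableBasis _).to_subtype
  obtain ⟨σ, hσ, hdens, hrich, hdec⟩ := Stage.exists_monotone_generic hF (K := Fin d → TripodSet)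
    (α := 1 / 2) ⟨by norm_num, by norm_num⟩ fun O : B => hB.isOpen O.2
  have := isMinimal_limitSystem hB hdec
  refine ⟨limitSystem σ, inferInstance, (· • ·), inferInstance, nonempty_limitSystem hσ,
    continuous_const_smul, one_smul G, mul_smul, MulAction.dense_orbit G, fun F hF => ?_,
    not_exists_embedding_limitSystem_shift_cube hσ hd (by simp) hrich⟩
  rw [mdimAlong_limitSystem hσ hdens hF, one_div_mul_eq_div,
    ENNReal.ofReal_div_of_pos two_pos, ENNReal.ofReal_natCast, ENNReal.ofReal_ofNat]
end

section
/- Let $G$ be an infinite countable discrete amenable group and let $\mathcal{T}$ be a finite tiling of $G$. Then for any $\epsilon > 0$ there exist a nonempty finite subset $K$ of $G$ and $\delta > 0$ such that for each $g \in G$ and each $(K,\delta)$-invariant nonempty finite subset $F$ of $G$, the union of those $\mathcal{T}g$-tiles which are contained in $F$ has cardinality greater than $(1-\epsilon)|F|$, i.e., $|\bigcup_{T \in \mathcal{T}g,\, T \subset F} T| > (1-\epsilon)|F|$. -/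
open Set Filter Topology
open scoped ENNReal NNReal symmDiff

/-!
If `x` lies in a tile `Sc`, every point `y` of this tile satisfies `y / x ∈ S / S`, so the tile is
contained in `Kx`, where `K` is the union of the finite sets `S / S` over all shapes `S`. Hence, if
a point of `F` lies in a tile that sticks out of `F`, then `Kx` also meets both `F` and its
complement: the points of `F` missed by the tiles inside `F` all belong to `B(F, K)`. A translated
tiling has the same shapes, so the same `K` serves every `𝒯g`, and `δ = ε` suffices.
-/

section TilesInInvariantSets

open scoped Pointwise

variable {G : Type*} [Group G]

theorem mem_rightTranslate {S : Set G} {c x : G} : x ∈ rightTranslate S c ↔ x / c ∈ S := by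
  simp [rightTranslate, div_eq_mul_inv]

theorem rightTranslate_rightTranslate (S : Set G) (c g : G) :
    rightTranslate (rightTranslate S c) g = rightTranslate S (c * g) := by
  simp only [rightTranslate, image_image, mul_assoc]

theorem sUnion_tilingTranslate (𝒯 : Set (Set G)) (g : G) :
    ⋃₀ tilingTranslate 𝒯 g = rightTranslate (⋃₀ 𝒯) g :=
  (image_sUnion (f := (· * g)) (s := 𝒯)).symm

theorem IsShapeSet.tilingTranslate {𝒯 𝒮 : Set (Set G)} (h : IsShapeSet 𝒯 𝒮) (g : G) :
    IsShapeSet (tilingTranslate 𝒯 g) 𝒮 := by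
  obtain ⟨h𝒮, hS, hT⟩ := h
  refine ⟨h𝒮, hS, ?_⟩
  rintro _ ⟨T, hT𝒯, rfl⟩
  obtain ⟨S, hS𝒮, c, rfl⟩ := hT T hT𝒯
  exact ⟨S, hS𝒮, c * g, rightTranslate_rightTranslate S c g⟩

theorem Bset_subset_inv_mul (F K : Set G) : Bset F K ⊆ K⁻¹ * F := by
  rintro x ⟨⟨y, hyK, hyF⟩, -⟩
  have hy : y / x ∈ K := mem_rightTranslate.mp hyK
  exact ⟨(y / x)⁻¹, inv_mem_inv.mpr hy, y, hyF, by simp⟩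

theorem finite_Bset {F K : Set G} (hF : F.Finite) (hK : K.Finite) : (Bset F K).Finite :=
  (hK.inv.mul hF).subset (Bset_subset_inv_mul F K)

theorem IsInvariantSet.lt_ncard_of_diff_subset {F K U : Set G} {ε : ℝ}
    (hinv : IsInvariantSet F K ε) (hF : F.Finite) (hK : K.Finite) (hU : F \ U ⊆ Bset F K)
    (hUF : U ⊆ F) : (1 - ε) * (F.ncard : ℝ) < (U.ncard : ℝ) := by
  have hdiff : ((F \ U).ncard : ℝ) < ε * F.ncard :=
    lt_of_le_of_lt (mod_cast ncard_le_ncard hU (finite_Bset hF hK)) hinv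
  have hsplit : ((F \ U).ncard : ℝ) + U.ncard = F.ncard :=
    mod_cast ncard_sdiff_add_ncard_of_subset hUF hF
  linarith

/-- The set `⋃ S S⁻¹` of quotients of two elements of a common shape `S ∈ 𝒮`. It controls the
relative position of two points of a tile, and is the set `K` for which invariance is required. -/
def shapeQuotients (𝒮 : Set (Set G)) : Set G := ⋃ S ∈ 𝒮, S / S

namespace IsShapeSet

variable {𝒯 𝒮 : Set (Set G)} {T F : Set G} {x y : G} {ε : ℝ}

theorem finite_shapeQuotients (h : IsShapeSet 𝒯 𝒮) : (shapeQuotients 𝒮).Finite :=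
  h.1.biUnion fun S hS => (h.2.1 S hS).1.div (h.2.1 S hS).1

theorem div_mem_shapeQuotients (h : IsShapeSet 𝒯 𝒮) (hT : T ∈ 𝒯) (hx : x ∈ T) (hy : y ∈ T) :
    y / x ∈ shapeQuotients 𝒮 := by
  obtain ⟨S, hS, c, rfl⟩ := h.2.2 T hT
  rw [mem_rightTranslate] at hx hy
  exact mem_biUnion hS ⟨y / c, hy, x / c, hx, div_div_div_cancel_right y x c⟩

theorem subset_rightTranslate_shapeQuotients (h : IsShapeSet 𝒯 𝒮) (hT : T ∈ 𝒯) (hx : x ∈ T) :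
    T ⊆ rightTranslate (shapeQuotients 𝒮) x :=
  fun _ hy => mem_rightTranslate.mpr (h.div_mem_shapeQuotients hT hx hy)

theorem nonempty_shapeQuotients (h : IsShapeSet 𝒯 𝒮) (hx : x ∈ ⋃₀ 𝒯) :
    (shapeQuotients 𝒮).Nonempty :=
  let ⟨_, hT, hxT⟩ := hx
  ⟨x / x, h.div_mem_shapeQuotients hT hxT hxT⟩

theorem diff_sUnion_subset_Bset (h : IsShapeSet 𝒯 𝒮) (hcover : F ⊆ ⋃₀ 𝒯) :
    F \ ⋃₀ {T ∈ 𝒯 | T ⊆ F} ⊆ Bset F (shapeQuotients 𝒮) := by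
  rintro x ⟨hxF, hxU⟩
  obtain ⟨T, hT, hxT⟩ := hcover hxF
  have hTK := h.subset_rightTranslate_shapeQuotients hT hxT
  have hTF : ¬T ⊆ F := fun hTF => hxU ⟨T, ⟨hT, hTF⟩, hxT⟩
  obtain ⟨y, hyT, hyF⟩ := not_subset.mp hTF
  exact ⟨⟨x, hTK hxT, hxF⟩, ⟨y, hTK hyT, hyF⟩⟩

theorem lt_ncard_sUnion (h : IsShapeSet 𝒯 𝒮) (hF : F.Finite) (hcover : F ⊆ ⋃₀ 𝒯)
    (hinv : IsInvariantSet F (shapeQuotients 𝒮) ε) :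
    (1 - ε) * (F.ncard : ℝ) < ((⋃₀ {T ∈ 𝒯 | T ⊆ F}).ncard : ℝ) :=
  hinv.lt_ncard_of_diff_subset hF h.finite_shapeQuotients (h.diff_sUnion_subset_Bset hcover)
    (sUnion_subset fun _ hT => hT.2)

end IsShapeSet

theorem tiles_fill_invariant_sets_general {𝒯 : Set (Set G)} (hcover : ⋃₀ 𝒯 = univ)
    (hfin : ∃ 𝒮 : Set (Set G), IsShapeSet 𝒯 𝒮) {ε : ℝ} (hε : 0 < ε) :
    ∃ K : Set G, K.Finite ∧ K.Nonempty ∧ ∃ δ > (0 : ℝ), ∀ g : G, ∀ F : Set G,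
      F.Finite → IsInvariantSet F K δ →
        (1 - ε) * (F.ncard : ℝ) <
          ((⋃₀ {T' ∈ tilingTranslate 𝒯 g | T' ⊆ F}).ncard : ℝ) := by
  obtain ⟨𝒮, h⟩ := hfin
  have hKne : (shapeQuotients 𝒮).Nonempty :=
    h.nonempty_shapeQuotients (hcover ▸ mem_univ (1 : G))
  refine ⟨shapeQuotients 𝒮, h.finite_shapeQuotients, hKne, ε, hε, fun g F hF hinv => ?_⟩
  have hcover_g : F ⊆ ⋃₀ tilingTranslate 𝒯 g := fun x _ => by
    simp only [sUnion_tilingTranslate, mem_rightTranslate, hcover, mem_univ]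
  exact (h.tilingTranslate g).lt_ncard_sUnion hF hcover_g hinv

end TilesInInvariantSets

/-- **Proposition.** If `𝒯` is a finite tiling of an infinite countable amenable group `G`,
then for every `ε > 0` there are a nonempty finite `K ⊆ G` and `δ > 0` such that for every
`g ∈ G` and every `(K,δ)`-invariant nonempty finite `F ⊆ G`, the union of the `𝒯g`-tiles
contained in `F` has cardinality greater than `(1-ε)|F|`. -/
theorem tiles_fill_invariant_sets (G : Type*) [Group G] [Countable G] [Infinite G]
    (hG : AmenableGroup G) (𝒯 : Set (Set G)) (ht : IsTilingOf 𝒯)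
    (hfin : ∃ 𝒮 : Set (Set G), IsShapeSet 𝒯 𝒮) (ε : ℝ) (hε : 0 < ε) :
    ∃ K : Set G, K.Finite ∧ K.Nonempty ∧ ∃ δ > (0 : ℝ), ∀ g : G, ∀ F : Set G,
      F.Finite → F.Nonempty → IsInvariantSet F K δ →
        (1 - ε) * (F.ncard : ℝ) <
          ((⋃₀ {T' ∈ tilingTranslate 𝒯 g | T' ⊆ F}).ncard : ℝ) := by
  obtain ⟨K, hKfin, hKne, δ, hδ, hfill⟩ := tiles_fill_invariant_sets_general ht.2.2 hfin hε
  exact ⟨K, hKfin, hKne, δ, hδ, fun g F hF _ hinv => hfill g F hF hinv⟩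
end

section
/- Let $G$ be an infinite countable discrete amenable group, $\mathcal{T}$ a syndetic finite tiling of $G$, and $\mathcal{S}_{\mathcal{T}}$ a set of shapes of $\mathcal{T}$. Then for any positive integer $n$ there exist a nonempty finite subset $K$ of $G$ and $\epsilon > 0$ such that for every shape $S \in \mathcal{S}_{\mathcal{T}}$ and every $(K,\epsilon)$-invariant nonempty finite subset $F$ of $G$, the set $F$ contains at least $n$ pairwise distinct $\mathcal{T}$-tiles of the shape $S$ (i.e., there are at least $n$ elements $c \in C(S)$ with $Sc \subset F$). -/
open Set Filter Topology
open scoped ENNReal NNReal symmDiff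

/-!
If `E * C = G` with `E` finite and `H` is any set of `n * |E|` elements, then
`H g ⊆ E * (C ∩ E⁻¹ H g)` for every `g`, so every right translate of the finite set `E⁻¹ H` contains
at least `n` points of `C`. Hence a set containing a right translate of `S E⁻¹ H` contains `S c` for
at least `n` elements `c ∈ C`. Finally, a `(K, 1)`-invariant set `F` contains a right translate of
`K`: for `k ∈ K` the set `k⁻¹ F` has more elements than `B(F, K)`, and every `g ∈ k⁻¹ F` outside
`B(F, K)` satisfies `K g ⊆ F`.
-/

section

open scoped Pointwise

variable {G : Type*} [Group G]

theorem rightTranslate_subset_mul_inter {E C : Set G} (hEC : E * C = univ) (H : Set G) (g : G) :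
    rightTranslate H g ⊆ E * (C ∩ rightTranslate (E⁻¹ * H) g) := by
  rintro _ ⟨h, hh, rfl⟩
  obtain ⟨e, he, c, hc, hec : e * c = h * g⟩ : h * g ∈ E * C := hEC ▸ mem_univ _
  have hc_eq : e⁻¹ * h * g = c := by rw [mul_assoc, ← hec, inv_mul_cancel_left]
  exact ⟨e, he, c, ⟨hc, e⁻¹ * h, mul_mem_mul (inv_mem_inv.2 he) hh, hc_eq⟩, hec⟩

theorem SyndeticSet.exists_finite_forall_le_ncard_inter [Infinite G] {C : Set G}
    (hC : SyndeticSet C) (n : ℕ) :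
    ∃ K : Set G, K.Finite ∧ ∀ g, n ≤ (C ∩ rightTranslate K g).ncard := by
  obtain ⟨E, hE, hEC : E * C = univ⟩ := hC
  obtain ⟨H, -, hH, hHcard⟩ := (infinite_univ (α := G)).exists_subset_ncard_eq (E.ncard * n)
  have hEne : E.Nonempty := Nonempty.of_mul_left (hEC ▸ univ_nonempty)
  have hK : (E⁻¹ * H).Finite := hE.inv.mul hH
  refine ⟨E⁻¹ * H, hK, fun g => ?_⟩
  have hfin : (C ∩ rightTranslate (E⁻¹ * H) g).Finite := (hK.image _).inter_of_right C
  refine Nat.le_of_mul_le_mul_left ?_ ((ncard_pos hE).2 hEne)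
  calc E.ncard * n = (rightTranslate H g).ncard := by
        rw [rightTranslate, ncard_image_of_injective _ (mul_left_injective g), hHcard]
    _ ≤ (E * (C ∩ rightTranslate (E⁻¹ * H) g)).ncard :=
        ncard_le_ncard (rightTranslate_subset_mul_inter hEC H g) (hE.mul hfin)
    _ ≤ E.ncard * (C ∩ rightTranslate (E⁻¹ * H) g).ncard := natCard_mul_le

theorem finite_setOf_rightTranslate_subset {S F : Set G} (hS : S.Nonempty) (hF : F.Finite) :
    {c | rightTranslate S c ⊆ F}.Finite := by
  obtain ⟨s, hs⟩ := hS
  exact (hF.preimage (mul_right_injective s).injOn).subset fun c hc => hc ⟨s, hs, rfl⟩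

theorem rightTranslate_subset_of_mem {S K F : Set G} {g c : G}
    (hF : rightTranslate (S * K) g ⊆ F) (hc : c ∈ rightTranslate K g) :
    rightTranslate S c ⊆ F := by
  obtain ⟨k, hk, rfl⟩ := hc
  rintro _ ⟨s, hs, rfl⟩
  exact hF ⟨s * k, mul_mem_mul hs hk, mul_assoc s k g⟩

theorem SyndeticSet.exists_finite_forall_le_ncard_rightTranslate_subset [Infinite G]
    {C S : Set G} (hC : SyndeticSet C) (hSfin : S.Finite) (hSne : S.Nonempty) (n : ℕ) :
    ∃ K : Set G, K.Finite ∧ ∀ (F : Set G) (g : G), F.Finite → rightTranslate K g ⊆ F →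
      n ≤ {c ∈ C | rightTranslate S c ⊆ F}.ncard := by
  obtain ⟨K, hK, hn⟩ := hC.exists_finite_forall_le_ncard_inter n
  refine ⟨S * K, hSfin.mul hK, fun F g hF hKF => (hn g).trans ?_⟩
  exact ncard_le_ncard (inter_subset_inter_right C fun c => rightTranslate_subset_of_mem hKF)
    ((finite_setOf_rightTranslate_subset hSne hF).inter_of_right C)

theorem IsInvariantSet.exists_rightTranslate_subset {F K : Set G} {ε : ℝ}
    (h : IsInvariantSet F K ε) (hε : ε ≤ 1) (hF : F.Finite) (hK : K.Finite) (hKne : K.Nonempty) :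
    ∃ g, rightTranslate K g ⊆ F := by
  obtain ⟨k, hk⟩ := hKne
  have hcard : (Bset F K).ncard < ((k⁻¹ * ·) '' F).ncard := by
    rw [ncard_image_of_injective F (mul_right_injective k⁻¹)]
    exact_mod_cast h.trans_le (mul_le_of_le_one_left (Nat.cast_nonneg F.ncard) hε)
  obtain ⟨_, ⟨x, hx, rfl⟩, hxB⟩ := exists_mem_notMem_of_ncard_lt_ncard hcard (finite_Bset hF hK)
  refine ⟨k⁻¹ * x, fun y hy => by_contra fun hyF => hxB ⟨?_, y, hy, hyF⟩⟩
  exact ⟨x, ⟨k, hk, mul_inv_cancel_left k x⟩, hx⟩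

theorem many_tiles_in_invariant_sets_general [Infinite G] {ι : Type*} [Finite ι] {S C : ι → Set G}
    (hSfin : ∀ i, (S i).Finite) (hSne : ∀ i, (S i).Nonempty) (hC : ∀ i, SyndeticSet (C i)) (n : ℕ) :
    ∃ K : Set G, K.Finite ∧ K.Nonempty ∧ ∀ ε ≤ (1 : ℝ), ∀ i, ∀ F : Set G, F.Finite →
      IsInvariantSet F K ε → n ≤ {c ∈ C i | rightTranslate (S i) c ⊆ F}.ncard := by
  choose K hK hn using fun i =>
    (hC i).exists_finite_forall_le_ncard_rightTranslate_subset (hSfin i) (hSne i) n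
  have hfin : (insert 1 (⋃ i, K i)).Finite := (finite_iUnion hK).insert 1
  refine ⟨insert 1 (⋃ i, K i), hfin, insert_nonempty _ _, fun ε hε i F hF hinv => ?_⟩
  obtain ⟨g, hg⟩ := hinv.exists_rightTranslate_subset hε hF hfin (insert_nonempty _ _)
  have hKi : K i ⊆ insert 1 (⋃ i, K i) := (subset_iUnion K i).trans (subset_insert _ _)
  exact hn i F g hF ((image_mono hKi).trans hg)

end

/-- **Proposition.** If `𝒯` is a syndetic finite tiling of an infinite countable amenable group
`G` with shape set `𝒮`, then for every `n ≥ 1` there are a nonempty finite `K ⊆ G` and `ε > 0`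
such that every `(K,ε)`-invariant nonempty finite `F ⊆ G` contains at least `n` `𝒯`-tiles of
each shape `S ∈ 𝒮`. -/
theorem many_tiles_in_invariant_sets (G : Type*) [Group G] [Countable G] [Infinite G]
    (hG : AmenableGroup G) (𝒯 𝒮 : Set (Set G)) (ht : IsTilingOf 𝒯) (hs : IsShapeSet 𝒯 𝒮)
    (hsyn : ∀ S ∈ 𝒮, SyndeticSet (center 𝒯 S)) (n : ℕ) (hn : 0 < n) :
    ∃ K : Set G, K.Finite ∧ K.Nonempty ∧ ∃ ε > (0 : ℝ), ∀ S ∈ 𝒮, ∀ F : Set G,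
      F.Finite → F.Nonempty → IsInvariantSet F K ε →
        n ≤ ({c ∈ center 𝒯 S | rightTranslate S c ⊆ F}).ncard := by
  have : Finite 𝒮 := hs.1
  obtain ⟨K, hK, hKne, h⟩ := many_tiles_in_invariant_sets_general
    (fun S : 𝒮 => (hs.2.1 S S.2).1) (fun S => (hs.2.1 S S.2).2) (fun S => hsyn S S.2) n
  exact ⟨K, hK, hKne, 1, one_pos, fun S hS F hF _ => h 1 le_rfl ⟨S, hS⟩ F hF⟩
end
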